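/- arXiv:1406.3974 — 7 statements merged into one kernel-verified Lean document; each statement's English description precedes it below -/
import Mathlib

section
/- Let k ≥ 1, let u be an infinite word over a finite alphabet Σ, and suppose Fac(u) ⊆ S_1 · S_2 ⋯ S_{k+1} for languages S_1, …, S_{k+1} ⊆ Σ* such that p_{S_i}(n) ≤ C for all i and all n ≥ 0. Then for every n ≥ 1, p_u(n) ≤ C^{k+1} · binom(n+k, k); in particular p_u(n) = O(n^k), so 𝓦_{k+1} ⊆ 𝓟(k). -/
/-!
A factor of length `n` splits into `k + 1` blocks taken from `S_1, …, S_{k+1}`. The block lengths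
form a weak composition of `n` into `k + 1` parts, of which there are `binom(n+k, k)`, and each
composition leaves at most `C` choices per block; `ncard_concat_le` is this count. The bound
`O(n^k)` follows from `binom(n+k, k) ≤ (n+k)^k ≤ ((k+1) n)^k` for `n ≥ 1`.
-/

/-- The factor of the infinite word `u` of length `n` starting at position `i`. -/
def wordSeg {α : Type*} (u : ℕ → α) (i n : ℕ) : List α :=
  (List.range n).map (fun t => u (i + t))

/-- The set of (finite) factors of the infinite word `u`. -/
def Factors {α : Type*} (u : ℕ → α) : Set (List α) :=
  {w | ∃ i, w = wordSeg u i w.length}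

/-- Subword complexity: the number of distinct factors of `u` of length `n`. -/
noncomputable def complexity {α : Type*} (u : ℕ → α) (n : ℕ) : ℕ :=
  {w : List α | w.length = n ∧ w ∈ Factors u}.ncard

/-- `p_L(n)`: the number of words of length `n` in the language `L`. -/
noncomputable def langComplexity {α : Type*} (L : Set (List α)) (n : ℕ) : ℕ :=
  {w ∈ L | w.length = n}.ncard

open Finset in
/-- A concatenation of words of `S_1, …, S_{k+1}` that has length `n` is determined by the tuple of
lengths of its blocks, one of `binom(n+k, k)` weak compositions of `n`, and by the choice of one of
at most `C` words of the prescribed length for each block. -/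
lemma ncard_concat_le {α : Type*} [Fintype α] (k C n : ℕ) (S : Fin (k + 1) → Set (List α))
    (hS : ∀ i, ∀ n, langComplexity (S i) n ≤ C) :
    {w : List α | w.length = n ∧ ∃ s : Fin (k + 1) → List α,
      (∀ i, s i ∈ S i) ∧ w = (List.ofFn s).flatten}.ncard
      ≤ C ^ (k + 1) * Nat.choose (n + k) k := by
  classical
  have hfin : ∀ i m, {w ∈ S i | w.length = m}.Finite := fun i m =>
    (List.finite_length_eq α m).subset fun w hw => hw.2
  -- `B l` consists of the concatenations whose `i`-th block has length `l i`.
  let B : (Fin (k + 1) →₀ ℕ) → Finset (List α) := fun l =>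
    (Fintype.piFinset fun i => (hfin i (l i)).toFinset).image fun s => (List.ofFn s).flatten
  have hB : ∀ l, #(B l) ≤ C ^ (k + 1) := by
    intro l
    refine card_image_le.trans ?_
    rw [Fintype.card_piFinset]
    calc ∏ i, #(hfin i (l i)).toFinset ≤ ∏ _i : Fin (k + 1), C := by
          refine prod_le_prod' fun i _ => ?_
          rw [← Set.ncard_eq_toFinset_card _ (hfin i (l i))]
          exact hS i (l i)
      _ = C ^ (k + 1) := by simp
  have hsub : {w : List α | w.length = n ∧ ∃ s : Fin (k + 1) → List α,
      (∀ i, s i ∈ S i) ∧ w = (List.ofFn s).flatten} ⊆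
      (((univ : Finset (Fin (k + 1))).finsuppAntidiag n).biUnion B : Finset (List α)) := by
    rintro w ⟨hw, s, hs, rfl⟩
    rw [mem_coe, mem_biUnion]
    refine ⟨Finsupp.equivFunOnFinite.symm fun i => (s i).length, ?_, ?_⟩
    · rw [mem_finsuppAntidiag]
      refine ⟨?_, by simp⟩
      rw [← hw]
      simp [List.length_flatten, List.map_ofFn, List.sum_ofFn, Fin.sum_univ_succ]
    · exact mem_image.2 ⟨s, by simpa using hs, rfl⟩
  calc _ ≤ (((univ : Finset (Fin (k + 1))).finsuppAntidiag n).biUnion B : Set (List α)).ncard :=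
        Set.ncard_le_ncard hsub (finite_toSet _)
    _ = #(((univ : Finset (Fin (k + 1))).finsuppAntidiag n).biUnion B) := Set.ncard_coe_finset _
    _ ≤ #((univ : Finset (Fin (k + 1))).finsuppAntidiag n) * C ^ (k + 1) :=
        card_biUnion_le_card_mul _ _ _ fun l _ => hB l
    _ = C ^ (k + 1) * Nat.choose (n + k) k := by
        rw [card_finsuppAntidiag_nat_eq_choose, mul_comm, card_univ, Fintype.card_fin,
          show k + 1 + n - 1 = n + k by omega, Nat.choose_symm_add]

/-- if `Fac(u) ⊆ S_1 ⋯ S_{k+1}` with `p_{S_i}(n) ≤ C` for all `i, n`, then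
`p_u(n) ≤ C^{k+1} · binom(n+k, k)` for all `n ≥ 1`; in particular `p_u(n) = O(n^k)`. -/
theorem stmt0 {α : Type*} [Fintype α] (k : ℕ) (hk : 1 ≤ k) (u : ℕ → α)
    (S : Fin (k + 1) → Set (List α)) (C : ℕ)
    (hS : ∀ i, ∀ n, langComplexity (S i) n ≤ C)
    (hFac : ∀ w ∈ Factors u, ∃ s : Fin (k + 1) → List α,
      (∀ i, s i ∈ S i) ∧ w = (List.ofFn s).flatten) :
    (∀ n, 1 ≤ n → complexity u n ≤ C ^ (k + 1) * Nat.choose (n + k) k) ∧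
    ∃ c : ℕ, ∀ n, 1 ≤ n → complexity u n ≤ c * n ^ k := by
  have hmain : ∀ n, complexity u n ≤ C ^ (k + 1) * Nat.choose (n + k) k := by
    intro n
    refine le_trans ?_ (ncard_concat_le k C n S hS)
    exact Set.ncard_le_ncard (fun w hw => ⟨hw.1, hFac w hw.2⟩)
      ((List.finite_length_eq α n).subset fun w hw => hw.1)
  refine ⟨fun n _ => hmain n, C ^ (k + 1) * (k + 1) ^ k, fun n hn => (hmain n).trans ?_⟩
  rw [mul_assoc, ← mul_pow]
  refine Nat.mul_le_mul_left _ ((Nat.choose_le_pow _ _).trans (Nat.pow_le_pow_left ?_ _))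
  -- `n + k ≤ (k + 1) * n` uses `1 ≤ n`.
  nlinarith
end

section
/- An infinite word u over a finite alphabet has linear subword complexity (p_u(n) = O(n)) if and only if there exist languages S and T, each containing at most a constant number of words of each length, such that every factor of u is the concatenation of a word of S and a word of T. In other words, 𝓦_2 = 𝓟(1). -/
/-! ### Factors, and the easy implication -/

section Basics

variable {α : Type*} {u : ℕ → α}

lemma length_wordSeg (i n : ℕ) : (wordSeg u i n).length = n := by
  simp [wordSeg]

lemma wordSeg_eq_iff {i j n : ℕ} :
    wordSeg u i n = wordSeg u j n ↔ ∀ t < n, u (i + t) = u (j + t) := by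
  simp [wordSeg]

lemma wordSeg_append (i a b : ℕ) :
    wordSeg u i (a + b) = wordSeg u i a ++ wordSeg u (i + a) b := by
  simp [wordSeg, List.range_add, Function.comp_def, Nat.add_assoc]

lemma factors_length_eq (n : ℕ) :
    {w : List α | w.length = n ∧ w ∈ Factors u} = Set.range (fun i => wordSeg u i n) := by
  ext w
  constructor
  · rintro ⟨rfl, i, hi⟩
    exact ⟨i, hi.symm⟩
  · rintro ⟨i, rfl⟩
    exact ⟨length_wordSeg i n, i, by simp [length_wordSeg]⟩

lemma complexity_eq (n : ℕ) :
    complexity u n = (Set.range (fun i => wordSeg u i n)).ncard := by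
  rw [complexity, factors_length_eq]

lemma range_wordSeg_finite [Finite α] (n : ℕ) :
    (Set.range (fun i => wordSeg u i n)).Finite :=
  (List.finite_length_eq α n).subset (by rintro _ ⟨i, rfl⟩; exact length_wordSeg i n)

/-- A product of two languages with at most `C` words of each length contains at most
`(n + 1) C²` words of length `n`. -/
lemma complexity_le_of_cover [Finite α] {S T : Set (List α)} {C : ℕ}
    (hS : ∀ n, langComplexity S n ≤ C) (hT : ∀ n, langComplexity T n ≤ C)
    (h : ∀ w ∈ Factors u, ∃ s ∈ S, ∃ t ∈ T, w = s ++ t) (n : ℕ) :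
    complexity u n ≤ (n + 1) * (C * C) := by
  have hfin : ∀ (L : Set (List α)) k, {w ∈ L | w.length = k}.Finite := fun L k =>
    (List.finite_length_eq α k).subset (fun w hw => hw.2)
  set F : ℕ → Set (List α) := fun k =>
    Set.image2 (· ++ ·) {w ∈ S | w.length = k} {w ∈ T | w.length = n - k} with hF
  have hFfin : ∀ k, (F k).Finite := fun k => (hfin S k).image2 _ (hfin T (n - k))
  have hsub : {w : List α | w.length = n ∧ w ∈ Factors u} ⊆ ⋃ k ∈ Finset.range (n + 1), F k := by
    rintro w ⟨hl, hw⟩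
    obtain ⟨s, hs, t, ht, rfl⟩ := h w hw
    rw [List.length_append] at hl
    simp only [Set.mem_iUnion, Finset.mem_range]
    exact ⟨s.length, by omega, s, ⟨hs, rfl⟩, t, ⟨ht, by omega⟩, rfl⟩
  have hFcard : ∀ k, (F k).ncard ≤ C * C := by
    intro k
    have : (F k).ncard ≤ langComplexity S k * langComplexity T (n - k) := by
      rw [langComplexity, langComplexity, ← Set.ncard_prod, hF]
      simp only [← Set.image_uncurry_prod]
      exact Set.ncard_image_le ((hfin S k).prod (hfin T (n - k)))
    exact this.trans (Nat.mul_le_mul (hS k) (hT _))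
  calc complexity u n ≤ (⋃ k ∈ Finset.range (n + 1), F k).ncard :=
        Set.ncard_le_ncard hsub ((Finset.range (n + 1)).finite_toSet.biUnion fun k _ => hFfin k)
    _ ≤ ∑ k ∈ Finset.range (n + 1), (F k).ncard := Finset.set_ncard_biUnion_le _ _
    _ ≤ ∑ k ∈ Finset.range (n + 1), C * C := Finset.sum_le_sum fun k _ => hFcard k
    _ = (n + 1) * (C * C) := by simp

end Basics

/-! ### The walk through the factors of a fixed length -/

section Rauzy

variable {α : Type*} {u : ℕ → α}

/-- The factor of length `N` at position `j` is right special: some other occurrence of it is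
followed by a different letter. -/
def RightSpecialAt (u : ℕ → α) (N j : ℕ) : Prop :=
  ∃ j', wordSeg u j' N = wordSeg u j N ∧ u (j' + N) ≠ u (j + N)

lemma rightSpecialAt_congr {N j k : ℕ} (h : wordSeg u j N = wordSeg u k N)
    (hj : RightSpecialAt u N j) : RightSpecialAt u N k := by
  obtain ⟨j', h1, h2⟩ := hj
  by_cases h3 : u (j' + N) = u (k + N)
  · exact ⟨j, h, fun h4 => h2 (h3.trans h4.symm)⟩
  · exact ⟨j', h1.trans h, h3⟩

lemma wordSeg_succ_eq_of_not_special {N j k : ℕ} (hj : ¬ RightSpecialAt u N j)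
    (h : wordSeg u j N = wordSeg u k N) : wordSeg u (j + 1) N = wordSeg u (k + 1) N := by
  have hlast : u (k + N) = u (j + N) := by
    by_contra hne
    exact hj ⟨k, h.symm, hne⟩
  rw [wordSeg_eq_iff] at h ⊢
  intro t ht
  rcases Nat.lt_or_ge (t + 1) N with h1 | h1
  · have := h (t + 1) h1
    rwa [show j + 1 + t = j + (t + 1) by omega, show k + 1 + t = k + (t + 1) by omega]
  · have hN : t + 1 = N := by omega
    rw [show j + 1 + t = j + N by omega, show k + 1 + t = k + N by omega, hlast]

lemma wordSeg_add_eq_of_not_special {N j k r : ℕ} (hj : ∀ s < r, ¬ RightSpecialAt u N (j + s))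
    (h : wordSeg u j N = wordSeg u k N) : wordSeg u (j + r) N = wordSeg u (k + r) N := by
  induction r with
  | zero => exact h
  | succ r ih =>
    exact wordSeg_succ_eq_of_not_special (hj r (by omega)) (ih fun s hs => hj s (by omega))

/-- Each right special factor of length `N` accounts for at least one unit of
`p_u(N+1) - p_u(N)`. -/
lemma card_special_add_le [Finite α] (N : ℕ) :
    ((fun j => wordSeg u j N) '' {j | RightSpecialAt u N j}).ncard + complexity u N
      ≤ complexity u (N + 1) := by
  classical
  set B := (fun j => wordSeg u j N) '' {j | RightSpecialAt u N j} with hB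
  have hX : ∀ x : List α, ∃ j, x ∈ Set.range (fun i => wordSeg u i N) → wordSeg u j N = x := by
    intro x
    by_cases hx : x ∈ Set.range (fun i => wordSeg u i N)
    · obtain ⟨j, hj⟩ := hx
      exact ⟨j, fun _ => hj⟩
    · exact ⟨0, fun h => absurd h hx⟩
  -- `e x` is the chosen occurrence of `x`, `f x` one continued by a different letter.
  choose e he using hX
  have hY : ∀ x : List α, ∃ j, x ∈ B → wordSeg u j N = x ∧ u (j + N) ≠ u (e x + N) := by
    intro x
    by_cases hx : x ∈ B
    · obtain ⟨j, hj, rfl⟩ := hx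
      have h1 := he (wordSeg u j N) ⟨j, rfl⟩
      obtain ⟨j', h2, h3⟩ := rightSpecialAt_congr h1.symm hj
      exact ⟨j', fun _ => ⟨h2.trans h1, h3⟩⟩
    · exact ⟨0, fun h => absurd h hx⟩
  choose f hf using hY
  have hcut : ∀ {i j : ℕ}, wordSeg u i (N + 1) = wordSeg u j (N + 1) →
      wordSeg u i N = wordSeg u j N ∧ u (i + N) = u (j + N) := by
    intro i j h
    rw [wordSeg_eq_iff] at h
    exact ⟨wordSeg_eq_iff.2 fun t ht => h t (by omega), h N (by omega)⟩
  have hBX : B ⊆ Set.range (fun i => wordSeg u i N) := by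
    rintro _ ⟨j, _, rfl⟩
    exact ⟨j, rfl⟩
  set I1 := (fun x => wordSeg u (f x) (N + 1)) '' B
  set I2 := (fun x => wordSeg u (e x) (N + 1)) '' Set.range (fun i => wordSeg u i N)
  have h1 : I1.ncard = B.ncard := by
    apply Set.InjOn.ncard_image
    intro x hx y hy hxy
    have := (hcut hxy).1
    rwa [(hf x hx).1, (hf y hy).1] at this
  have h2 : I2.ncard = complexity u N := by
    rw [complexity_eq]
    apply Set.InjOn.ncard_image
    intro x hx y hy hxy
    have := (hcut hxy).1
    rwa [he x hx, he y hy] at this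
  have hfin := range_wordSeg_finite (u := u) (N + 1)
  have hs1 : I1 ⊆ Set.range (fun i => wordSeg u i (N + 1)) := by
    rintro _ ⟨x, _, rfl⟩
    exact ⟨f x, rfl⟩
  have hs2 : I2 ⊆ Set.range (fun i => wordSeg u i (N + 1)) := by
    rintro _ ⟨x, _, rfl⟩
    exact ⟨e x, rfl⟩
  have hdisj : Disjoint I1 I2 := by
    rw [Set.disjoint_left]
    rintro _ ⟨x, hx, rfl⟩ ⟨y, hy, hxy⟩
    obtain ⟨h3, h4⟩ := hcut hxy
    rw [he y hy, (hf x hx).1] at h3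
    subst h3
    exact (hf y hx).2 h4.symm
  rw [← h1, ← h2, complexity_eq,
    ← Set.ncard_union_eq hdisj (hfin.subset hs1) (hfin.subset hs2)]
  exact Set.ncard_le_ncard (Set.union_subset hs1 hs2) hfin

/-- By pigeonhole, linear complexity yields in each interval `[a, 2a)` a length at which the
complexity increases by at most `2C`. -/
lemma exists_small_increment {C a : ℕ} (ha : 1 ≤ a)
    (hC : ∀ n, 1 ≤ n → complexity u n ≤ C * n) :
    ∃ N, a ≤ N ∧ N < 2 * a ∧ complexity u (N + 1) ≤ complexity u N + 2 * C := by
  by_contra! hcon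
  have key : ∀ k ≤ a, k * (2 * C + 1) ≤ complexity u (a + k) := by
    intro k
    induction k with
    | zero => simp
    | succ k ih =>
      intro hk
      have h1 := ih (by omega)
      have h2 := hcon (a + k) (by omega) (by omega)
      rw [← Nat.add_assoc]
      calc (k + 1) * (2 * C + 1) = k * (2 * C + 1) + (2 * C + 1) := by ring
        _ ≤ _ := by omega
  have h1 := key a le_rfl
  have h2 := hC (a + a) (by omega)
  nlinarith

/-- A closed stretch of the walk without right special factors is repeated forever. -/
lemma periodic_of_cycle {N a q : ℕ} (hq : 1 ≤ q)
    (hns : ∀ s < q, ¬ RightSpecialAt u N (a + s))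
    (h : wordSeg u a N = wordSeg u (a + q) N) (k : ℕ) :
    ¬ RightSpecialAt u N (a + k) ∧ ∃ s < q, wordSeg u (a + k) N = wordSeg u (a + s) N := by
  induction k with
  | zero => exact ⟨hns 0 hq, 0, hq, rfl⟩
  | succ k ih =>
    obtain ⟨h1, s, hs, h2⟩ := ih
    have h3 : wordSeg u (a + (k + 1)) N = wordSeg u (a + (s + 1)) N :=
      wordSeg_succ_eq_of_not_special h1 h2
    have h4 : ∃ s < q, wordSeg u (a + (k + 1)) N = wordSeg u (a + s) N := by
      rcases Nat.lt_or_ge (s + 1) q with h5 | h5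
      · exact ⟨s + 1, h5, h3⟩
      · obtain rfl : s + 1 = q := by omega
        exact ⟨0, hq, h3.trans h.symm⟩
    refine ⟨?_, h4⟩
    obtain ⟨s', hs', h5⟩ := h4
    exact fun hsp => hns s' hs' (rightSpecialAt_congr h5 hsp)

lemma cycle_base_recurs {N a q : ℕ} (hq : 1 ≤ q)
    (hns : ∀ s < q, ¬ RightSpecialAt u N (a + s))
    (h : wordSeg u a N = wordSeg u (a + q) N) (k : ℕ) :
    wordSeg u (a + k * q) N = wordSeg u a N := by
  induction k with
  | zero => simp
  | succ k ih =>
    have h1 : wordSeg u (a + k * q + q) N = wordSeg u (a + q) N :=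
      wordSeg_add_eq_of_not_special
        (fun s _ => by
          have := (periodic_of_cycle hq hns h (k * q + s)).1
          rwa [← Nat.add_assoc] at this) ih
    rw [show a + (k + 1) * q = a + k * q + q by ring, h1, h]

/-- All deterministic cycles met by the walk have the same vertices, since the walk stays in each
of them forever. -/
lemma exists_cycle_vertex (u : ℕ → α) (N : ℕ) :
    ∃ r, ∀ a q, 1 ≤ q → (∀ s < q, ¬ RightSpecialAt u N (a + s)) →
      wordSeg u a N = wordSeg u (a + q) N → ∃ s < q, wordSeg u r N = wordSeg u (a + s) N := by
  by_cases hex : ∃ r q, 1 ≤ q ∧ (∀ s < q, ¬ RightSpecialAt u N (r + s)) ∧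
      wordSeg u r N = wordSeg u (r + q) N
  · obtain ⟨r, q₀, hq₀, hns₀, h₀⟩ := hex
    refine ⟨r, fun a q hq hns h => ?_⟩
    have hle : a ≤ r + a * q₀ := by nlinarith
    obtain ⟨_, s, hs, h1⟩ := periodic_of_cycle hq hns h (r + a * q₀ - a)
    rw [Nat.add_sub_cancel' hle, cycle_base_recurs hq₀ hns₀ h₀] at h1
    exact ⟨s, hs, h1⟩
  · exact ⟨0, fun a q hq hns h => absurd ⟨a, q, hq, hns, h⟩ hex⟩

/-- The positions in `Q` start pairwise disjoint stretches of the walk, each of `m` distinct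
vertices none of which is right special. -/
def IsPacking (u : ℕ → α) (N m : ℕ) (Q : Finset ℕ) : Prop :=
  (∀ q ∈ Q, ∀ t < m, ¬ RightSpecialAt u N (q + t)) ∧
  ∀ q ∈ Q, ∀ q' ∈ Q, ∀ t < m, ∀ t' < m,
    wordSeg u (q + t) N = wordSeg u (q' + t') N → q = q' ∧ t = t'

lemma IsPacking.card_mul_le [Finite α] {N m : ℕ} {Q : Finset ℕ} (h : IsPacking u N m Q) :
    Q.card * m ≤ complexity u N := by
  have hinj : Set.InjOn (fun z : ℕ × ℕ => wordSeg u (z.1 + z.2) N)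
      (↑(Q ×ˢ Finset.range m) : Set (ℕ × ℕ)) := by
    rintro ⟨q, t⟩ hz ⟨q', t'⟩ hz' heq
    simp only [Finset.coe_product, Finset.coe_range, Set.mem_prod, Finset.mem_coe,
      Set.mem_Iio] at hz hz'
    obtain ⟨h1, h2⟩ := h.2 q hz.1 q' hz'.1 t hz.2 t' hz'.2 heq
    rw [h1, h2]
  have h1 := hinj.ncard_image
  rw [Set.ncard_coe_finset, Finset.card_product, Finset.card_range] at h1
  rw [← h1, complexity_eq]
  refine Set.ncard_le_ncard ?_ (range_wordSeg_finite N)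
  rintro _ ⟨z, _, rfl⟩
  exact ⟨z.1 + z.2, rfl⟩

lemma exists_maximal_packing [Finite α] {N m K : ℕ} (hm : 1 ≤ m)
    (hK : complexity u N ≤ K * m) :
    ∃ Q, IsPacking u N m Q ∧ Q.card ≤ K ∧ ∀ i ∉ Q, ¬ IsPacking u N m (insert i Q) := by
  classical
  have hle : ∀ Q, IsPacking u N m Q → Q.card ≤ K := fun Q hQ =>
    Nat.le_of_mul_le_mul_right (hQ.card_mul_le.trans hK) hm
  have h0 : ∃ Q, IsPacking u N m Q ∧ Q.card = 0 := ⟨∅, by simp [IsPacking], rfl⟩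
  obtain ⟨Q, hQ, hc⟩ := Nat.findGreatest_spec
    (P := fun c => ∃ Q, IsPacking u N m Q ∧ Q.card = c) (Nat.zero_le K) h0
  refine ⟨Q, hQ, hle Q hQ, fun i hi hins => ?_⟩
  have h1 := Nat.le_findGreatest (P := fun c => ∃ Q, IsPacking u N m Q ∧ Q.card = c)
    (hle _ hins) ⟨_, hins, rfl⟩
  rw [Finset.card_insert_of_notMem hi] at h1
  omega

/-- Boundedly many factors of length `N` are enough to meet every stretch of `2m` steps of the
walk. -/
lemma exists_hitting_set [Finite α] {N m K K' : ℕ} (hm : 1 ≤ m)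
    (hK : complexity u N ≤ K * m) (hK' : complexity u (N + 1) ≤ complexity u N + K') :
    ∃ R : Finset ℕ, R.card ≤ K' + K + 1 ∧
      ∀ i, ∃ r ∈ R, ∃ s ≤ 2 * m, wordSeg u r N = wordSeg u (i + s) N := by
  classical
  set B := (fun j => wordSeg u j N) '' {j | RightSpecialAt u N j} with hB
  have hBcard : B.ncard ≤ K' := by
    have := card_special_add_le (u := u) N
    rw [← hB] at this
    omega
  have hBfin : B.Finite := (range_wordSeg_finite (u := u) N).subset (by
    rintro _ ⟨j, _, rfl⟩
    exact ⟨j, rfl⟩)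
  have hocc : ∀ x : List α, ∃ j, x ∈ B → wordSeg u j N = x := by
    intro x
    by_cases hx : x ∈ B
    · obtain ⟨j, _, hj⟩ := hx
      exact ⟨j, fun _ => hj⟩
    · exact ⟨0, fun h => absurd h hx⟩
  choose e he using hocc
  obtain ⟨Q, hQ, hQc, hmax⟩ := exists_maximal_packing (u := u) hm hK
  obtain ⟨r₀, hr₀⟩ := exists_cycle_vertex u N
  refine ⟨hBfin.toFinset.image e ∪ Q.image (· + m) ∪ {r₀}, ?_, fun i => ?_⟩
  · have h1 := Finset.card_union_le (hBfin.toFinset.image e ∪ Q.image (· + m)) {r₀}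
    have h2 := Finset.card_union_le (hBfin.toFinset.image e) (Q.image (· + m))
    have h3 : (hBfin.toFinset.image e).card ≤ hBfin.toFinset.card := Finset.card_image_le
    have h4 : (Q.image (· + m)).card ≤ Q.card := Finset.card_image_le
    rw [← Set.ncard_eq_toFinset_card B hBfin] at h3
    rw [Finset.card_singleton] at h1
    omega
  by_cases hsp : ∃ t < m, RightSpecialAt u N (i + t)
  · obtain ⟨t, ht, hsp⟩ := hsp
    have hmem : wordSeg u (i + t) N ∈ B := ⟨i + t, hsp, rfl⟩
    refine ⟨e (wordSeg u (i + t) N), ?_, t, by omega, he _ hmem⟩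
    simp only [Finset.mem_union, Finset.mem_image, Set.Finite.mem_toFinset]
    exact Or.inl (Or.inl ⟨_, hmem, rfl⟩)
  push Not at hsp
  by_cases hrep : ∃ t t', t < t' ∧ t' < m ∧ wordSeg u (i + t) N = wordSeg u (i + t') N
  · obtain ⟨t, t', htt, ht', heq⟩ := hrep
    obtain ⟨s, hs, h1⟩ := hr₀ (i + t) (t' - t) (by omega)
      (fun s hs => by rw [Nat.add_assoc]; exact hsp (t + s) (by omega))
      (by rwa [show i + t + (t' - t) = i + t' by omega])
    refine ⟨r₀, by simp, t + s, by omega, ?_⟩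
    rwa [← Nat.add_assoc]
  push Not at hrep
  -- By maximality the stretch starting at `i` meets a member of the packing.
  have hmeet : ∃ q ∈ Q, ∃ t < m, ∃ s < m, wordSeg u (q + t) N = wordSeg u (i + s) N := by
    by_cases hi : i ∈ Q
    · exact ⟨i, hi, 0, hm, 0, hm, rfl⟩
    by_contra! hno
    refine hmax i hi ⟨?_, ?_⟩
    · intro q hq
      rcases Finset.mem_insert.1 hq with rfl | hq
      · exact hsp
      · exact hQ.1 q hq
    · intro q hq q' hq' t ht t' ht' heq
      rcases Finset.mem_insert.1 hq with rfl | hqQ <;>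
        rcases Finset.mem_insert.1 hq' with rfl | hqQ'
      · refine ⟨rfl, ?_⟩
        rcases Nat.lt_trichotomy t t' with h | h | h
        · exact absurd heq (hrep t t' h ht')
        · exact h
        · exact absurd heq.symm (hrep t' t h ht)
      · exact absurd heq.symm (hno q' hqQ' t' ht' t ht)
      · exact absurd heq (hno q hqQ t ht t' ht')
      · exact hQ.2 q hqQ q' hqQ' t ht t' ht' heq
  obtain ⟨q, hq, t, ht, s, hs, heq⟩ := hmeet
  refine ⟨q + m, ?_, s + (m - t), by omega, ?_⟩
  · simp only [Finset.mem_union, Finset.mem_image]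
    exact Or.inl (Or.inr ⟨q, hq, rfl⟩)
  · have h1 := wordSeg_add_eq_of_not_special (r := m - t)
      (fun s' hs' => by rw [Nat.add_assoc]; exact hQ.1 q hq (t + s') (by omega)) heq
    rwa [show q + t + (m - t) = q + m by omega, Nat.add_assoc i] at h1

/-- At scale `m`, boundedly many positions `p` suffice for every block `u[i, i+8m)` to reoccur
around one of them, with `p` at depth `d ∈ [m, 3m]` inside the block. -/
lemma exists_cuts [Finite α] {C m : ℕ} (hm : 1 ≤ m)
    (hC : ∀ n, 1 ≤ n → complexity u n ≤ C * n) :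
    ∃ P : Finset ℕ, P.card ≤ 22 * C + 3 ∧ ∀ i, ∃ p ∈ P, ∃ d, m ≤ d ∧ d ≤ 3 * m ∧ d ≤ p ∧
      ∀ t < 8 * m, u (i + t) = u (p - d + t) := by
  classical
  obtain ⟨N, hN1, hN2, hN3⟩ := exists_small_increment (a := 10 * m) (by omega) hC
  have hNc : complexity u N ≤ (20 * C) * m :=
    calc complexity u N ≤ C * N := hC N (by omega)
      _ ≤ C * (20 * m) := Nat.mul_le_mul_left _ (by omega)
      _ = (20 * C) * m := by ring
  obtain ⟨R, hRc, hR⟩ := exists_hitting_set hm hNc hN3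
  -- The cuts `2m` and `3m` serve the blocks that start too close to the beginning of `u`.
  refine ⟨R.image (· + 3 * m) ∪ {2 * m, 3 * m}, ?_, fun i => ?_⟩
  · have h1 := Finset.card_union_le (R.image (· + 3 * m)) {2 * m, 3 * m}
    have h2 : (R.image (· + 3 * m)).card ≤ R.card := Finset.card_image_le
    have h3 : ({2 * m, 3 * m} : Finset ℕ).card ≤ 2 := Finset.card_le_two
    omega
  rcases Nat.lt_or_ge i (2 * m) with hi | hi
  · rcases Nat.lt_or_ge i m with hi' | hi'
    · refine ⟨2 * m, by simp, 2 * m - i, by omega, by omega, by omega, fun t _ => ?_⟩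
      congr 1; omega
    · refine ⟨3 * m, by simp, 3 * m - i, by omega, by omega, by omega, fun t _ => ?_⟩
      congr 1; omega
  · obtain ⟨r, hr, s, hs, heq⟩ := hR (i - 2 * m)
    refine ⟨r + 3 * m, Finset.mem_union_left _ (Finset.mem_image_of_mem _ hr), m + s,
      by omega, by omega, by omega, fun t ht => ?_⟩
    have h1 := wordSeg_eq_iff.1 heq (2 * m - s + t) (by omega)
    rw [show i - 2 * m + s + (2 * m - s + t) = i + t by omega] at h1
    rw [← h1]
    congr 1; omega

end Rauzy

/-! ### Assembling the scales -/

/-- A language has bounded complexity if, up to a finite set `E`, its words of length `n` are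
indexed by the elements of bounded sets `P k` with `2^k ≤ n < 2^(k+3)`: only three scales `k`
contribute to a given length. -/
lemma langComplexity_le_of_scales {α : Type*} {L E : Set (List α)} (hE : E.Finite)
    {P : ℕ → Finset ℕ} {K : ℕ} (hP : ∀ k, (P k).card ≤ K) (g : ℕ → ℕ → List α)
    (hL : ∀ w ∈ L, w ∈ E ∨ ∃ k, ∃ p ∈ P k, 2 ^ k ≤ w.length ∧ w.length < 2 ^ (k + 3) ∧
      w = g p w.length) (n : ℕ) :
    langComplexity L n ≤ E.ncard + 3 * K := by
  classical
  set l := Nat.log 2 n with hl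
  set F : Finset (List α) := hE.toFinset ∪ (P l ∪ P (l - 1) ∪ P (l - 2)).image (g · n) with hF
  have hsub : {w ∈ L | w.length = n} ⊆ (F : Set (List α)) := by
    rintro w ⟨hw, rfl⟩
    simp only [F, Finset.coe_union, Finset.coe_image, Set.Finite.coe_toFinset]
    rcases hL w hw with h | ⟨k, p, hp, h1, h2, h3⟩
    · exact Or.inl h
    · right
      have hpos : 0 < 2 ^ k := by positivity
      have hk1 : k ≤ l := Nat.le_log_of_pow_le (by norm_num) h1
      have hk2 : l < k + 3 := Nat.log_lt_of_lt_pow (by omega) h2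
      refine ⟨p, ?_, h3.symm⟩
      rcases (show k = l ∨ k = l - 1 ∨ k = l - 2 by omega) with h | h | h <;>
        subst k <;> simp [hp]
  have hcard : F.card ≤ E.ncard + 3 * K := by
    have h1 := Finset.card_union_le hE.toFinset ((P l ∪ P (l - 1) ∪ P (l - 2)).image (g · n))
    have h2 : ((P l ∪ P (l - 1) ∪ P (l - 2)).image (g · n)).card ≤ _ := Finset.card_image_le
    have h3 := Finset.card_union_le (P l ∪ P (l - 1)) (P (l - 2))
    have h4 := Finset.card_union_le (P l) (P (l - 1))
    have h5 := hP l
    have h6 := hP (l - 1)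
    have h7 := hP (l - 2)
    rw [← Set.ncard_eq_toFinset_card E hE, ← hF] at h1
    omega
  calc langComplexity L n ≤ (F : Set (List α)).ncard :=
        Set.ncard_le_ncard hsub F.finite_toSet
    _ = F.card := Set.ncard_coe_finset F
    _ ≤ _ := hcard

/-- `𝓦₂ = 𝓟(1)`: an infinite word has linear subword complexity iff its set of
factors is contained in the concatenation `S·T` of two languages of bounded complexity. -/
theorem stmt1 {α : Type*} [Fintype α] (u : ℕ → α) :
    (∃ (S T : Set (List α)) (C : ℕ),
        (∀ n, langComplexity S n ≤ C) ∧ (∀ n, langComplexity T n ≤ C) ∧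
        ∀ w ∈ Factors u, ∃ s ∈ S, ∃ t ∈ T, w = s ++ t) ↔
    (∃ C : ℕ, ∀ n, 1 ≤ n → complexity u n ≤ C * n) := by
  constructor
  · rintro ⟨S, T, C, hS, hT, h⟩
    refine ⟨2 * (C * C), fun n hn => (complexity_le_of_cover hS hT h n).trans ?_⟩
    nlinarith [Nat.zero_le (C * C)]
  · rintro ⟨C, hC⟩
    choose P hPc hP using fun k : ℕ => exists_cuts (m := 2 ^ k) Nat.one_le_two_pow hC
    set K := 22 * C + 3
    -- Words of length less than 4 are below the smallest scale and go entirely into `T`.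
    set E : Set (List α) := {w | w.length < 4} with hEdef
    have hE : E.Finite := List.finite_length_lt α 4
    set S : Set (List α) := {w | w ∈ ({[]} : Set (List α)) ∨ ∃ k, ∃ p ∈ P k,
      2 ^ k ≤ w.length ∧ w.length < 2 ^ (k + 3) ∧ w = wordSeg u (p - w.length) w.length} with hS
    set T : Set (List α) := {w | w ∈ E ∨ ∃ k, ∃ p ∈ P k,
      2 ^ k ≤ w.length ∧ w.length < 2 ^ (k + 3) ∧ w = wordSeg u p w.length} with hT
    refine ⟨S, T, 1 + E.ncard + 3 * K, fun n => ?_, fun n => ?_, fun w hw => ?_⟩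
    · have := langComplexity_le_of_scales (L := S) (Set.finite_singleton []) hPc
        (fun p n => wordSeg u (p - n) n) (fun w hw => hw) n
      rw [Set.ncard_singleton] at this
      omega
    · have := langComplexity_le_of_scales (L := T) hE hPc
        (fun p n => wordSeg u p n) (fun w hw => hw) n
      omega
    · rcases Nat.lt_or_ge w.length 4 with hlen | hlen
      · exact ⟨[], Or.inl rfl, w, Or.inl hlen, rfl⟩
      obtain ⟨k, hk1, hk2⟩ : ∃ k, 4 * 2 ^ k ≤ w.length ∧ w.length < 8 * 2 ^ k := by
        have h1 : 2 ^ Nat.log 2 w.length ≤ w.length := Nat.pow_log_le_self 2 (by omega)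
        have h2 : w.length < 2 ^ (Nat.log 2 w.length + 1) :=
          Nat.lt_pow_succ_log_self (by norm_num) _
        have h3 : 2 ≤ Nat.log 2 w.length := Nat.le_log_of_pow_le (by norm_num) (by omega)
        obtain ⟨k, hk⟩ := Nat.exists_eq_add_of_le' h3
        rw [hk] at h1 h2
        refine ⟨k, ?_, ?_⟩
        · rw [pow_add] at h1; omega
        · rw [pow_add, pow_add] at h2; omega
      have hk3 : 2 ^ (k + 3) = 8 * 2 ^ k := by rw [pow_add]; omega
      obtain ⟨i, hi⟩ := hw
      obtain ⟨p, hp, d, hd1, hd2, hd3, hd4⟩ := hP k i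
      have hsplit : w = wordSeg u (p - d) d ++ wordSeg u p (w.length - d) := by
        have h1 : wordSeg u i w.length = wordSeg u (p - d) w.length :=
          wordSeg_eq_iff.2 fun t ht => hd4 t (by omega)
        have h2 := wordSeg_append (u := u) (p - d) d (w.length - d)
        rw [Nat.add_sub_cancel' (by omega), Nat.sub_add_cancel hd3] at h2
        rw [← h2, ← h1]
        exact hi
      refine ⟨_, Or.inr ⟨k, p, hp, ?_⟩, _, Or.inr ⟨k, p, hp, ?_⟩, hsplit⟩
      · rw [length_wordSeg]
        exact ⟨hd1, by omega, rfl⟩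
      · rw [length_wordSeg]
        exact ⟨by omega, by omega, rfl⟩
end

section
/- Let u be an infinite word over a finite alphabet which is not ultimately periodic, and let w be a factor of u of length n with minimal period p(w). Then w admits a final occurrence in u: there exists j ≥ 0 such that u[j+1..j+n] = w and u_{j+i} ≠ u_{j+i+p(w)} for some i with n − p(w) + 1 ≤ i ≤ n. -/
/-- `u` is ultimately periodic: `u = v w w w ⋯` for some finite `v` and nonempty `w`. -/
def UltimatelyPeriodic {α : Type*} (u : ℕ → α) : Prop :=
  ∃ p, 0 < p ∧ ∃ N, ∀ i, N ≤ i → u (i + p) = u i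

/-- The minimal period `p(w)` of a finite word `w`: the least `p > 0` such that
`w_i = w_{i+p}` whenever both indices are within `w` (here 0-based). -/
noncomputable def minPeriod {α : Type*} (w : List α) : ℕ :=
  sInf {p | 0 < p ∧ ∀ i, i + p < w.length → w[i]? = w[i + p]?}

/-- The minimal period is attained and is at most the length, the length itself being a period. -/
lemma minPeriod_spec {α : Type*} (w : List α) (hne : w ≠ []) :
    0 < minPeriod w ∧ minPeriod w ≤ w.length ∧
      ∀ i, i + minPeriod w < w.length → w[i]? = w[i + minPeriod w]? := by
  have hlen : w.length ∈ {p | 0 < p ∧ ∀ i, i + p < w.length → w[i]? = w[i + p]?} :=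
    ⟨List.length_pos_iff.mpr hne, fun i hi => by omega⟩
  have hmem := Nat.sInf_mem ⟨_, hlen⟩
  exact ⟨hmem.1, Nat.sInf_le hlen, hmem.2⟩

lemma wordSeg_length_eq_iff {α : Type*} (u : ℕ → α) (j : ℕ) (w : List α) :
    wordSeg u j w.length = w ↔ ∀ t, t < w.length → w[t]? = some (u (j + t)) := by
  constructor
  · intro h t ht
    rw [← h]
    simp [wordSeg, ht]
  · intro h
    apply List.ext_getElem?
    intro t
    by_cases ht : t < w.length
    · rw [h t ht]
      simp [wordSeg, ht]
    · simp [wordSeg, ht]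

/-- every (nonempty) factor `w` of a non-ultimately-periodic word `u` admits
a final occurrence: an occurrence `w = u[j..j+n)` together with a position
`i ∈ [n − p(w), n)` with `u_{j+i} ≠ u_{j+i+p(w)}`. -/
theorem stmt8 {α : Type*} (u : ℕ → α) (hnp : ¬ UltimatelyPeriodic u)
    (w : List α) (hw : w ∈ Factors u) (hne : w ≠ []) :
    ∃ j : ℕ, wordSeg u j w.length = w ∧
      ∃ i : ℕ, w.length - minPeriod w ≤ i ∧ i < w.length ∧
        u (j + i) ≠ u (j + i + minPeriod w) := by
  obtain ⟨hpos, hle, hper⟩ := minPeriod_spec w hne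
  obtain ⟨j₀, hj₀⟩ := hw
  by_contra! hcon
  set p := minPeriod w
  have hshift : ∀ j, wordSeg u j w.length = w →
      ∀ i, i < w.length → u (j + i) = u (j + i + p) := by
    intro j hj i hi
    by_cases hip : w.length - p ≤ i
    · exact hcon j hj i hip hi
    · have hocc := (wordSeg_length_eq_iff u j w).mp hj
      have h := hper i (by omega)
      rw [hocc i hi, hocc (i + p) (by omega)] at h
      simpa [add_assoc] using h
  have hall : ∀ k, wordSeg u (j₀ + k * p) w.length = w := by
    intro k
    induction k with
    | zero => simpa using hj₀.symm
    | succ k ih =>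
      rw [wordSeg_length_eq_iff]
      intro t ht
      rw [(wordSeg_length_eq_iff u _ w).mp ih t ht, hshift _ ih t ht]
      congr 2
      ring
  refine hnp ⟨p, hpos, j₀, fun i hi => ?_⟩
  -- Position `i` lies in the occurrence of `w` with index `(i - j₀) / p`, at offset `(i - j₀) % p`.
  have h := hshift _ (hall ((i - j₀) / p)) ((i - j₀) % p) ((Nat.mod_lt _ hpos).trans_le hle)
  have hi' : j₀ + (i - j₀) / p * p + (i - j₀) % p = i := by
    have := Nat.div_add_mod' (i - j₀) p
    omega
  rw [hi'] at h
  exact h.symm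
end

section
/- Let t be the Thue–Morse word, the fixed point beginning with 0 of the morphism φ : 0 ↦ 01, 1 ↦ 10 on the alphabet {0,1}. Then there exist languages S_1 and S_2 with at most 2 words of each length n ≥ 1 (one of each length suffices for n = 0) such that every factor of t belongs to S_1 · S_2; in particular t ∈ 𝓦_2. Concretely, one may take S_1 to be the set of all suffixes of the words φⁿ(0) and φⁿ(1), n ≥ 0, and S_2 the set of all their prefixes. -/
/-- The Thue–Morse morphism `φ : 0 ↦ 01, 1 ↦ 10` (with `false = 0`, `true = 1`). -/
def phiTM : Bool → List Bool
  | false => [false, true]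
  | true => [true, false]

/-- `φⁿ(c)` : the `n`-th iterate of the morphism `φ` applied to the letter `c`. -/
def phiIter : ℕ → Bool → List Bool
  | 0, c => [c]
  | n + 1, c => (phiIter n c).flatMap phiTM

theorem phiIter_succ (m : ℕ) (c : Bool) :
    phiIter (m + 1) c = phiIter m c ++ phiIter m (!c) := by
  induction m generalizing c with
  | zero => cases c <;> rfl
  | succ m ih =>
    calc phiIter (m + 2) c = (phiIter (m + 1) c).flatMap phiTM := rfl
      _ = phiIter (m + 1) c ++ phiIter (m + 1) (!c) := by
        rw [ih c, List.flatMap_append, ← ih c]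
        rfl

theorem phiIter_length (m : ℕ) (c : Bool) : (phiIter m c).length = 2 ^ m := by
  induction m generalizing c with
  | zero => rfl
  | succ m ih => rw [phiIter_succ, List.length_append, ih, ih]; ring

theorem phiIter_prefix_add (m k : ℕ) (c : Bool) : phiIter m c <+: phiIter (m + k) c := by
  induction k with
  | zero => exact List.prefix_rfl
  | succ k ih =>
    rw [← add_assoc, phiIter_succ]
    exact ih.trans (List.prefix_append _ _)

theorem exists_phiIter_suffix_add (m k : ℕ) (c : Bool) :
    ∃ d, phiIter m c <:+ phiIter (m + k) d := by
  induction k with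
  | zero => exact ⟨c, List.suffix_rfl⟩
  | succ k ih =>
    obtain ⟨d, hd⟩ := ih
    refine ⟨!d, ?_⟩
    rw [← add_assoc, phiIter_succ, Bool.not_not]
    exact hd.trans (List.suffix_append _ _)

theorem exists_suffix_phiIter_add (m k : ℕ) (c : Bool) :
    ∃ d, phiIter m d <:+ phiIter (m + k) c := by
  induction k generalizing c with
  | zero => exact ⟨c, List.suffix_rfl⟩
  | succ k ih =>
    obtain ⟨d, hd⟩ := ih (!c)
    refine ⟨d, ?_⟩
    rw [← add_assoc, phiIter_succ]
    exact hd.trans (List.suffix_append _ _)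

/-- A language each of whose words of length `n` is `f false` or `f true` has at most two of them. -/
theorem langComplexity_le_two (L : Set (List Bool)) (n : ℕ) (f : Bool → List Bool)
    (h : ∀ s ∈ L, s.length = n → ∃ c, s = f c) : langComplexity L n ≤ 2 := by
  have hsub : {w ∈ L | w.length = n} ⊆ ({f false, f true} : Set (List Bool)) := by
    rintro s ⟨hs, hn⟩
    obtain ⟨c, rfl⟩ := h s hs hn
    cases c <;> simp
  exact (Set.ncard_le_ncard hsub (Set.toFinite _)).trans
    ((Set.ncard_insert_le _ _).trans (by simp))

theorem prefix_complexity (n : ℕ) :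
    langComplexity {s : List Bool | ∃ m c, s <+: phiIter m c} n ≤ 2 := by
  refine langComplexity_le_two _ n (fun c => (phiIter n c).take n) ?_
  rintro s ⟨m, c, hs⟩ hn
  have h1 : s <+: phiIter (n + m) c := by
    rw [add_comm]; exact hs.trans (phiIter_prefix_add m n c)
  have h2 : s <+: phiIter n c :=
    List.prefix_of_prefix_length_le h1 (phiIter_prefix_add n m c)
      (by rw [phiIter_length, hn]; exact Nat.lt_two_pow_self.le)
  exact ⟨c, by simpa [hn] using List.prefix_iff_eq_take.1 h2⟩

theorem suffix_complexity (n : ℕ) :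
    langComplexity {s : List Bool | ∃ m c, s <:+ phiIter m c} n ≤ 2 := by
  refine langComplexity_le_two _ n (fun c => (phiIter n c).drop ((phiIter n c).length - n)) ?_
  rintro s ⟨m, c, hs⟩ hn
  obtain ⟨d, hd⟩ := exists_phiIter_suffix_add m n c
  rw [add_comm] at hd
  obtain ⟨e, he⟩ := exists_suffix_phiIter_add n m d
  have h2 : s <:+ phiIter n e :=
    List.suffix_of_suffix_length_le (hs.trans hd) he
      (by rw [phiIter_length, hn]; exact Nat.lt_two_pow_self.le)
  exact ⟨e, by simpa [hn] using List.suffix_iff_eq_drop.1 h2⟩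

theorem wordSeg_add {α : Type*} (u : ℕ → α) (i a b : ℕ) :
    wordSeg u i (a + b) = wordSeg u i a ++ wordSeg u (i + a) b := by
  simp [wordSeg, List.range_add, Function.comp_def, add_assoc]

theorem wordSeg_flatMap (t : ℕ → Bool) (he : ∀ n, t (2 * n) = t n)
    (ho : ∀ n, t (2 * n + 1) = ! t n) (i n : ℕ) :
    (wordSeg t i n).flatMap phiTM = wordSeg t (2 * i) (2 * n) := by
  induction n with
  | zero => rfl
  | succ n ih =>
    have h : wordSeg t (2 * (i + n)) 2 = phiTM (t (i + n)) := by
      have : wordSeg t (2 * (i + n)) 2 = [t (2 * (i + n)), t (2 * (i + n) + 1)] := rfl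
      rw [this, he, ho]
      cases t (i + n) <;> rfl
    rw [wordSeg_add, List.flatMap_append, ih, mul_add 2 n 1, mul_one, wordSeg_add,
      ← mul_add, h]
    simp [wordSeg]

theorem phiIter_eq_wordSeg (t : ℕ → Bool) (he : ∀ n, t (2 * n) = t n)
    (ho : ∀ n, t (2 * n + 1) = ! t n) (m a : ℕ) :
    phiIter m (t a) = wordSeg t (a * 2 ^ m) (2 ^ m) := by
  induction m with
  | zero => simp [phiIter, wordSeg]
  | succ m ih =>
    rw [phiIter, ih, wordSeg_flatMap t he ho]
    congr 1 <;> ring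

theorem wordSeg_prefix {α : Type*} (u : ℕ → α) (i : ℕ) {a b : ℕ} (h : a ≤ b) :
    wordSeg u i a <+: wordSeg u i b := by
  obtain ⟨k, rfl⟩ := Nat.exists_eq_add_of_le h
  rw [wordSeg_add]
  exact List.prefix_append _ _

theorem wordSeg_suffix {α : Type*} (u : ℕ → α) (i a b : ℕ) :
    wordSeg u (i + a) b <:+ wordSeg u i (a + b) := by
  rw [wordSeg_add]
  exact List.suffix_append _ _

/-- An interval `[i, i + n]` of positive integers contains a point `(b + 1) * 2 ^ m` lying strictly
within distance `2 ^ m` of both endpoints. -/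
theorem exists_dyadic_cut (i n : ℕ) (hi : 0 < i) :
    ∃ m b, b * 2 ^ m < i ∧ i ≤ (b + 1) * 2 ^ m ∧ (b + 1) * 2 ^ m ≤ i + n ∧
      i + n < (b + 2) * 2 ^ m := by
  classical
  let P : ℕ → Prop := fun m => ∃ a, i ≤ a * 2 ^ m ∧ a * 2 ^ m ≤ i + n
  have hex : ∃ m, ¬ P m := by
    refine ⟨i + n, ?_⟩
    rintro ⟨a, h1, h2⟩
    have hlt : i + n < 2 ^ (i + n) := Nat.lt_two_pow_self
    rcases Nat.eq_zero_or_pos a with rfl | ha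
    · omega
    · nlinarith
  obtain ⟨m, hm, hm'⟩ : ∃ m, P m ∧ ¬ P (m + 1) := by
    by_contra! hcon
    obtain ⟨k, hk⟩ := hex
    have hall : ∀ k, P k := fun k => by
      induction k with
      | zero => exact ⟨i, by simp, by simp⟩
      | succ k ih => exact hcon k ih
    exact hk (hall k)
  obtain ⟨a, h1, h2⟩ := hm
  have hdouble : ∀ c, c * 2 ^ (m + 1) = 2 * c * 2 ^ m := fun c => by ring
  rcases Nat.even_or_odd' a with ⟨c, rfl | rfl⟩
  · exact absurd ⟨c, by rw [hdouble]; exact h1, by rw [hdouble]; exact h2⟩ hm'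
  · refine ⟨m, 2 * c, ?_, h1, h2, ?_⟩
    · by_contra! hle
      refine hm' ⟨c, by rw [hdouble]; exact hle, ?_⟩
      rw [hdouble]
      exact (Nat.mul_le_mul_right _ (Nat.le_succ _)).trans h2
    · by_contra! hle
      refine hm' ⟨c + 1, ?_, by rw [hdouble]; exact hle⟩
      rw [hdouble]
      exact h1.trans (Nat.mul_le_mul_right _ (by omega))

/-- the Thue–Morse word `t` (the fixed point starting with `0` of `φ`,
i.e. `t 0 = 0`, `t (2n) = t n`, `t (2n+1) = ¬ t n`) belongs to `𝓦₂`: with `S₁` the set of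
all suffixes of the words `φⁿ(0)`, `φⁿ(1)` and `S₂` the set of all their prefixes, each of
`S₁`, `S₂` has at most 2 words of each length, and every factor of `t` lies in `S₁·S₂`. -/
theorem stmt11 (t : ℕ → Bool) (h0 : t 0 = false)
    (he : ∀ n, t (2 * n) = t n) (ho : ∀ n, t (2 * n + 1) = ! t n) :
    (∀ n, langComplexity {s : List Bool | ∃ m c, s <:+ phiIter m c} n ≤ 2) ∧
    (∀ n, langComplexity {s : List Bool | ∃ m c, s <+: phiIter m c} n ≤ 2) ∧
    (∀ w ∈ Factors t,
      ∃ s₁ ∈ {s : List Bool | ∃ m c, s <:+ phiIter m c},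
        ∃ s₂ ∈ {s : List Bool | ∃ m c, s <+: phiIter m c},
          w = s₁ ++ s₂) := by
  refine ⟨suffix_complexity, prefix_complexity, ?_⟩
  rintro w ⟨i, hw⟩
  generalize w.length = n at hw
  subst hw
  rcases Nat.eq_zero_or_pos i with rfl | hi
  · refine ⟨[], ⟨0, false, List.nil_suffix⟩, _, ⟨n, t 0, ?_⟩, rfl⟩
    rw [phiIter_eq_wordSeg t he ho, zero_mul]
    exact wordSeg_prefix t 0 Nat.lt_two_pow_self.le
  · obtain ⟨m, b, h1, h2, h3, h4⟩ := exists_dyadic_cut i n hi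
    rw [add_mul, one_mul] at h2 h3
    rw [add_mul] at h4
    obtain ⟨p, hp⟩ := Nat.exists_eq_add_of_le h1.le
    obtain ⟨q, hq⟩ := Nat.exists_eq_add_of_le h2
    obtain ⟨r, hr⟩ := Nat.exists_eq_add_of_le h3
    have hpq : 2 ^ m = p + q := by omega
    have hn : n = q + r := by omega
    refine ⟨wordSeg t i q, ⟨m, t b, ?_⟩, wordSeg t (i + q) r, ⟨m, t (b + 1), ?_⟩, ?_⟩
    · rw [phiIter_eq_wordSeg t he ho, hp]
      nth_rewrite 3 [hpq]
      exact wordSeg_suffix t _ p q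
    · rw [phiIter_eq_wordSeg t he ho, add_mul, one_mul, hq]
      exact wordSeg_prefix t _ (by omega)
    · rw [hn, wordSeg_add]
end

section
/- Let s be a Sturmian word, i.e., an infinite word over {0,1} with p_s(n) = n+1 for all n ≥ 0. Then there exist languages S_1 and S_2, each containing at most 2 words of each length n ≥ 1, such that every factor of s belongs to S_1 · S_2; in particular s ∈ 𝓦_2. Concretely, one may take S_1 = {va : a ∈ {0,1}, v a right special factor of s} ∪ {ε} and S_2 = {av : a ∈ {0,1}, v a left special factor of s} ∪ {ε}. -/
/-- `v` is a right special factor of `u`. -/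
def RightSpecial {α : Type*} (u : ℕ → α) (v : List α) : Prop :=
  ∃ a b : α, a ≠ b ∧ (v ++ [a]) ∈ Factors u ∧ (v ++ [b]) ∈ Factors u

/-- `v` is a left special factor of `u`. -/
def LeftSpecial {α : Type*} (u : ℕ → α) (v : List α) : Prop :=
  ∃ a b : α, a ≠ b ∧ (a :: v) ∈ Factors u ∧ (b :: v) ∈ Factors u

namespace Sturmian

/-! ### Segments and factors -/

section Basic

variable {α : Type*} {u : ℕ → α}

@[simp] lemma length_wordSeg (i n : ℕ) : (wordSeg u i n).length = n := by simp [wordSeg]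

lemma wordSeg_zero (i : ℕ) : wordSeg u i 0 = [] := rfl

lemma wordSeg_succ (i n : ℕ) : wordSeg u i (n + 1) = wordSeg u i n ++ [u (i + n)] := by
  simp [wordSeg, List.range_succ]

lemma wordSeg_add (i m n : ℕ) :
    wordSeg u i (m + n) = wordSeg u i m ++ wordSeg u (i + m) n := by
  induction n with
  | zero => simp [wordSeg_zero]
  | succ n ih => rw [← add_assoc, wordSeg_succ, ih, wordSeg_succ]; simp [add_assoc]

lemma wordSeg_cons (i n : ℕ) : wordSeg u i (n + 1) = u i :: wordSeg u (i + 1) n := by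
  rw [add_comm, wordSeg_add, wordSeg_succ, wordSeg_zero]; simp

lemma wordSeg_mem (i n : ℕ) : wordSeg u i n ∈ Factors u := ⟨i, by simp⟩

lemma mem_left {x y : List α} (h : x ++ y ∈ Factors u) : x ∈ Factors u := by
  obtain ⟨i, hi⟩ := h
  rw [List.length_append, wordSeg_add] at hi
  exact ⟨i, (List.append_inj hi (by simp)).1⟩

lemma mem_right {x y : List α} (h : x ++ y ∈ Factors u) : y ∈ Factors u := by
  obtain ⟨i, hi⟩ := h
  rw [List.length_append, wordSeg_add] at hi
  exact ⟨i + x.length, (List.append_inj hi (by simp)).2⟩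

/-- The factors form a factor-closed language, in a form that lets `simp` match the
concatenation. -/
lemma mem_infix {w x t y : List α} (h : w ∈ Factors u) (e : w = x ++ (t ++ y)) : t ∈ Factors u :=
  mem_left (mem_right (e ▸ h))

lemma exists_ext {w : List α} (h : w ∈ Factors u) : ∃ a, w ++ [a] ∈ Factors u := by
  obtain ⟨i, hi⟩ := h
  refine ⟨u (i + w.length), ?_⟩
  have := wordSeg_mem (u := u) i (w.length + 1)
  rwa [wordSeg_succ, ← hi] at this

lemma RightSpecial.suffix {x v : List α} (h : RightSpecial u (x ++ v)) : RightSpecial u v := by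
  obtain ⟨a, b, hab, ha, hb⟩ := h
  exact ⟨a, b, hab, mem_right (by simpa using ha), mem_right (by simpa using hb)⟩

end Basic

variable {u s : ℕ → Bool}

lemma rightSpecial_iff {v : List Bool} :
    RightSpecial u v ↔ ∀ a, v ++ [a] ∈ Factors u := by
  constructor
  · rintro ⟨a, b, hab, ha, hb⟩ c
    have : c = a ∨ c = b := by clear ha hb; revert a b c; decide
    rcases this with rfl | rfl <;> assumption
  · intro h
    exact ⟨true, false, by simp, h _, h _⟩

lemma leftSpecial_iff {v : List Bool} :
    LeftSpecial u v ↔ ∀ a, a :: v ∈ Factors u := by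
  constructor
  · rintro ⟨a, b, hab, ha, hb⟩ c
    have : c = a ∨ c = b := by clear ha hb; revert a b c; decide
    rcases this with rfl | rfl <;> assumption
  · intro h
    exact ⟨true, false, by simp, h _, h _⟩

/-- Two distinct binary words of the same length, split at their last difference. -/
lemma exists_last_diff : ∀ z v : List Bool, z.length = v.length → z ≠ v →
    ∃ x y b t, z = x ++ b :: t ∧ v = y ++ (!b) :: t := by
  intro z
  induction z with
  | nil => intro v h hne; exact absurd (List.length_eq_zero_iff.1 h.symm).symm hne
  | cons c z ih =>
    intro v h hne
    cases v with
    | nil => simp at h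
    | cons d v =>
      by_cases hzv : z = v
      · subst hzv
        refine ⟨[], [], c, z, rfl, ?_⟩
        have : d = !c := by
          have : c ≠ d := fun e => hne (by rw [e])
          revert this; clear hne h; revert c d; decide
        simp [this]
      · obtain ⟨x, y, b, t, rfl, rfl⟩ := ih v (by simpa using h) hzv
        exact ⟨c :: x, d :: y, b, t, rfl, rfl⟩

/-! ### Counting factors and special factors -/

/-- The factors of `u` of length `n`, as a finset. -/
noncomputable def fac (u : ℕ → Bool) (n : ℕ) : Finset (List Bool) :=
  Set.Finite.toFinset (s := {w : List Bool | w.length = n ∧ w ∈ Factors u})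
    ((List.finite_length_eq Bool n).subset fun _ h => h.1)

@[simp] lemma mem_fac {n : ℕ} {w : List Bool} :
    w ∈ fac u n ↔ w.length = n ∧ w ∈ Factors u := by simp [fac]

lemma card_fac (n : ℕ) : (fac u n).card = complexity u n := by
  exact (Set.ncard_eq_toFinset_card _ _).symm

/-- Abstract form of `p(n+1) ≥ p(n) + #{special factors}`: here `e a x` is the extension of `x`
by the letter `a`, `A` and `B` are the factors of lengths `n` and `n + 1`, and `T` is a set of
special factors. -/
lemma card_add_card_le {X : Type*} [DecidableEq X] (e : Bool → X → X)
    (he : ∀ a b x y, e a x = e b y → a = b ∧ x = y) (A B T : Finset X)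
    (hA : ∀ x ∈ A, ∃ a, e a x ∈ B) (hTB : ∀ x ∈ T, ∀ a, e a x ∈ B) :
    A.card + T.card ≤ B.card := by
  choose! f hf using hA
  have h1 : (A.image fun x => e (f x) x).card = A.card :=
    Finset.card_image_of_injective _ fun x y h => (he _ _ _ _ h).2
  have h2 : (T.image fun x => e (!f x) x).card = T.card :=
    Finset.card_image_of_injective _ fun x y h => (he _ _ _ _ h).2
  rw [← h1, ← h2, ← Finset.card_union_of_disjoint]
  · apply Finset.card_le_card
    intro y hy
    rcases Finset.mem_union.1 hy with hy | hy
    · obtain ⟨x, hx, rfl⟩ := Finset.mem_image.1 hy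
      exact hf x hx
    · obtain ⟨x, hx, rfl⟩ := Finset.mem_image.1 hy
      exact hTB x hx _
  · rw [Finset.disjoint_left]
    intro y hy hy'
    obtain ⟨x, hx, rfl⟩ := Finset.mem_image.1 hy
    obtain ⟨x', hx', h⟩ := Finset.mem_image.1 hy'
    obtain ⟨h3, rfl⟩ := he _ _ _ _ h
    simp at h3

lemma card_fac_add_le (n : ℕ) (T : Finset (List Bool))
    (hT : ∀ x ∈ T, x.length = n ∧ RightSpecial u x) :
    (fac u n).card + T.card ≤ (fac u (n + 1)).card := by
  apply card_add_card_le (fun a x => x ++ [a])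
  · intro a b x y h
    have := List.append_inj' h rfl
    exact ⟨by simpa using this.2, this.1⟩
  · intro x hx
    rw [mem_fac] at hx
    obtain ⟨a, ha⟩ := exists_ext hx.2
    exact ⟨a, mem_fac.2 ⟨by simp [hx.1], ha⟩⟩
  · intro x hx a
    exact mem_fac.2 ⟨by simp [(hT x hx).1], rightSpecial_iff.1 (hT x hx).2 a⟩

/-! ### Aperiodicity and recurrence -/

/-- `u` is eventually periodic. -/
def EvPeriodic (u : ℕ → Bool) : Prop := ∃ q p, 0 < p ∧ ∀ k, q ≤ k → u (k + p) = u k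

/-- If a factor is repeated and no right special factor of its length starts in between, then the
word loops forever. -/
lemma evPeriodic_of_loop {i j n : ℕ} (hij : i < j) (h : wordSeg u i n = wordSeg u j n)
    (hns : ∀ k, i ≤ k → k < j → ¬ RightSpecial u (wordSeg u k n)) : EvPeriodic u := by
  have next : ∀ a b, wordSeg u a n = wordSeg u b n → ¬ RightSpecial u (wordSeg u a n) →
      u (a + n) = u (b + n) := by
    intro a b hab hn
    by_contra hne
    refine hn ⟨_, _, hne, ?_, ?_⟩
    · rw [← wordSeg_succ]; exact wordSeg_mem _ _
    · rw [hab, ← wordSeg_succ]; exact wordSeg_mem _ _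
  have key : ∀ k, wordSeg u (i + k) n = wordSeg u (j + k) n ∧
      ¬ RightSpecial u (wordSeg u (i + k) n) := by
    intro k
    induction k using Nat.strong_induction_on with
    | _ k ih =>
      have h1 : wordSeg u (i + k) n = wordSeg u (j + k) n := by
        cases k with
        | zero => exact h
        | succ k =>
          obtain ⟨h1, h2⟩ := ih k (by omega)
          have h3 := next _ _ h1 h2
          have h4 : wordSeg u (i + k) (n + 1) = wordSeg u (j + k) (n + 1) := by
            rw [wordSeg_succ, wordSeg_succ, h1, h3]
          rw [wordSeg_cons, wordSeg_cons] at h4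
          exact (List.cons.inj h4).2
      refine ⟨h1, ?_⟩
      by_cases hk : i + k < j
      · exact hns _ (by omega) hk
      · obtain ⟨h2, h3⟩ := ih (i + k - j) (by omega)
        rw [h2, show j + (i + k - j) = i + k by omega] at h3
        exact h3
  refine ⟨i + n, j - i, by omega, fun k hk => ?_⟩
  have := next _ _ (key (k - (i + n))).1 (key (k - (i + n))).2
  rw [show i + (k - (i + n)) + n = k by omega,
    show j + (k - (i + n)) + n = k + (j - i) by omega] at this
  exact this.symm

lemma exists_rightSpecial (hu : ¬ EvPeriodic u) (n : ℕ) :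
    ∃ v, v.length = n ∧ RightSpecial u v := by
  by_contra hcon
  push Not at hcon
  have hns : ∀ k, ¬ RightSpecial u (wordSeg u k n) := fun k => hcon _ (by simp)
  obtain ⟨i, -, j, -, hij, h⟩ := Set.infinite_univ.exists_ne_map_eq_of_mapsTo
    (f := fun i => wordSeg u i n) (t := {w | w.length = n}) (fun i _ => by simp)
    (List.finite_length_eq Bool n)
  rcases lt_or_gt_of_ne hij with hij | hij
  · exact hu (evPeriodic_of_loop hij h fun k _ _ => hns k)
  · exact hu (evPeriodic_of_loop hij h.symm fun k _ _ => hns k)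

lemma le_card_fac (hu : ¬ EvPeriodic u) (n : ℕ) : n + 1 ≤ (fac u n).card := by
  induction n with
  | zero => exact Finset.card_pos.2 ⟨[], mem_fac.2 ⟨rfl, wordSeg_mem 0 0⟩⟩
  | succ n ih =>
    obtain ⟨v, hv, hr⟩ := exists_rightSpecial hu n
    have := card_fac_add_le n {v} (u := u) (by simp [hv, hr])
    simp at this
    omega

/-- An eventually periodic word has bounded complexity. -/
lemma not_evPeriodic (hp : ∀ n, complexity s n = n + 1) : ¬ EvPeriodic s := by
  rintro ⟨q, p, hp0, h⟩
  have hseg : ∀ n k, ∃ k' < q + p, wordSeg s k n = wordSeg s k' n := by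
    intro n k
    induction k using Nat.strong_induction_on with
    | _ k ih =>
      by_cases hk : k < q + p
      · exact ⟨k, hk, rfl⟩
      · obtain ⟨k', hk', e⟩ := ih (k - p) (by omega)
        refine ⟨k', hk', e ▸ ?_⟩
        unfold wordSeg
        apply List.map_congr_left
        intro t _
        rw [← h (k - p + t) (by omega)]
        congr 1; omega
  have h1 : fac s (q + p) ⊆ (Finset.range (q + p)).image fun k => wordSeg s k (q + p) := by
    intro w hw
    obtain ⟨hl, i, hi⟩ := mem_fac.1 hw
    obtain ⟨k, hk, e⟩ := hseg (q + p) i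
    rw [hl, e] at hi
    exact Finset.mem_image.2 ⟨k, Finset.mem_range.2 hk, hi.symm⟩
  have h2 := (Finset.card_le_card h1).trans Finset.card_image_le
  rw [card_fac, hp, Finset.card_range] at h2
  omega

/-- Recurrence, in the form of arbitrarily long left extensions: the tail `k ↦ s (k + N)` is not
eventually periodic either, so it has at least, hence exactly, the `n + 1` factors of `s`. -/
lemma exists_left_ext (hp : ∀ n, complexity s n = n + 1) {w : List Bool} (hw : w ∈ Factors s)
    (N : ℕ) : ∃ z, z.length = N ∧ z ++ w ∈ Factors s := by
  set t : ℕ → Bool := fun k => s (k + N) with ht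
  have hseg : ∀ i n, wordSeg t i n = wordSeg s (i + N) n := by
    intro i n
    unfold wordSeg
    apply List.map_congr_left
    intro k _
    simp only [ht]
    congr 1; omega
  have hnt : ¬ EvPeriodic t := by
    rintro ⟨q, p, hp0, h⟩
    refine not_evPeriodic hp ⟨q + N, p, hp0, fun k hk => ?_⟩
    have := h (k - N) (by omega)
    simp only [ht] at this
    rwa [show k - N + p + N = k + p by omega, show k - N + N = k by omega] at this
  have hsub : fac t w.length ⊆ fac s w.length := by
    intro x hx
    obtain ⟨hl, i, hi⟩ := mem_fac.1 hx
    exact mem_fac.2 ⟨hl, i + N, by rw [← hseg]; exact hi⟩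
  have heq := Finset.eq_of_subset_of_card_le hsub (by
    rw [card_fac (u := s), hp]; exact le_card_fac hnt _)
  have hwt : w ∈ fac t w.length := by rw [heq]; exact mem_fac.2 ⟨rfl, hw⟩
  obtain ⟨-, i, hi⟩ := mem_fac.1 hwt
  refine ⟨wordSeg s i N, by simp, ?_⟩
  rw [hi, hseg, ← wordSeg_add]
  exact wordSeg_mem _ _

/-! ### Uniqueness of special factors -/

lemma rightSpecial_unique (hp : ∀ n, complexity s n = n + 1) {v v' : List Bool}
    (hv : RightSpecial s v) (hv' : RightSpecial s v') (hl : v.length = v'.length) : v = v' := by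
  by_contra hne
  have := card_fac_add_le v.length {v, v'} (u := s) (by simp [hv, hv', hl])
  rw [card_fac, card_fac, hp, hp, Finset.card_pair hne] at this
  omega

lemma leftSpecial_unique (hp : ∀ n, complexity s n = n + 1) {v v' : List Bool}
    (hv : LeftSpecial s v) (hv' : LeftSpecial s v') (hl : v.length = v'.length) : v = v' := by
  by_contra hne
  rw [leftSpecial_iff] at hv hv'
  have := card_add_card_le (fun a x => a :: x) (fun a b x y h => by simpa using h)
    (fac s v.length) (fac s (v.length + 1)) {v, v'} (by
      intro x hx
      rw [mem_fac] at hx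
      obtain ⟨z, hz, hzx⟩ := exists_left_ext hp hx.2 1
      obtain ⟨a, rfl⟩ := List.length_eq_one_iff.1 hz
      exact ⟨a, mem_fac.2 ⟨by simp [hx.1], hzx⟩⟩) (by
      intro x hx a
      have hx : x = v ∨ x = v' := by simpa using hx
      rcases hx with rfl | rfl
      · exact mem_fac.2 ⟨by simp, hv a⟩
      · exact mem_fac.2 ⟨by simp [hl], hv' a⟩)
  rw [card_fac, card_fac, hp, hp, Finset.card_pair hne] at this
  omega

/-- A right special factor is the tail of a right special factor one letter longer. -/
lemma exists_cons_rightSpecial (hp : ∀ n, complexity s n = n + 1) {w : List Bool}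
    (hw : RightSpecial s w) : ∃ d, RightSpecial s (d :: w) := by
  obtain ⟨r, hl, hr⟩ := exists_rightSpecial (not_evPeriodic hp) (w.length + 1)
  cases r with
  | nil => simp at hl
  | cons d r =>
    have : r = w := rightSpecial_unique hp (RightSpecial.suffix (x := [d]) hr) hw (by simpa using hl)
    exact ⟨d, this ▸ hr⟩

/-! ### Balance -/

/-- Take `w` of minimal length with `0w0` and `1w1` factors. One of `0w`, `1w`, say `dw`, is the
right special factor of its length; let `e` be the other letter. By minimality `dw` does not start
inside an occurrence of `ewe`, so the `|w| + 2` factors of length `|w| + 1` starting there are not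
right special; two of them coincide by counting, which makes `s` eventually periodic. -/
lemma balanced (hp : ∀ n, complexity s n = n + 1) (w : List Bool) :
    ∀ a, a :: (w ++ [a]) ∈ Factors s → (!a) :: (w ++ [!a]) ∈ Factors s → False := by
  induction hm : w.length using Nat.strong_induction_on generalizing w with
  | _ m ih =>
  intro a ha ha'
  have hall : ∀ b, b :: (w ++ [b]) ∈ Factors s := by
    intro b
    rcases Bool.eq_or_eq_not b a with rfl | rfl <;> assumption
  have hw : RightSpecial s w := rightSpecial_iff.2 fun b => mem_right (x := [b]) (hall b)
  obtain ⟨d, hd⟩ := exists_cons_rightSpecial hp hw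
  obtain ⟨i, hi⟩ := hall (!d)
  have hlen : ((!d) :: (w ++ [!d])).length = (m + 1) + 1 := by simp [hm]
  rw [hlen, wordSeg_cons, wordSeg_succ] at hi
  obtain ⟨hi0, hi1⟩ := List.cons.inj hi
  obtain ⟨hiw, hi2⟩ := List.append_inj' hi1 rfl
  have hi2 : (!d) = s (i + 1 + m) := by simpa using hi2
  have hnot : ∀ k, i ≤ k → k < i + (m + 2) → wordSeg s k (m + 1) ≠ d :: w := by
    intro k hk1 hk2 hk
    rw [wordSeg_cons] at hk
    obtain ⟨hk0, hkw⟩ := List.cons.inj hk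
    by_cases e1 : k = i
    · subst e1; rw [hk0] at hi0; simp at hi0
    by_cases e2 : k = i + 1 + m
    · rw [← e2, hk0] at hi2; simp at hi2
    obtain ⟨j, rfl⟩ : ∃ j, k = i + 1 + j := ⟨k - (i + 1), by omega⟩
    obtain ⟨l, rfl⟩ : ∃ l, m = j + (l + 1) := ⟨m - j - 1, by omega⟩
    -- `w` ends in `d t` and begins with `t d̄`, where `t` is the overlap
    set t := wordSeg s (i + 1 + j + 1) l with htdef
    have hw1 : w = wordSeg s (i + 1) j ++ d :: t := by
      rw [hiw, wordSeg_add, wordSeg_cons, hk0]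
    have hw2 : w = t ++ (!d) :: wordSeg s (i + 1 + j + 1 + l + 1) j := by
      rw [← hkw, show j + (l + 1) = l + (j + 1) by omega, wordSeg_add, wordSeg_cons, hi2,
        show i + 1 + j + 1 + l = i + 1 + (j + (l + 1)) by omega]
    refine ih l (by omega) t (by simp [htdef]) d ?_ ?_
    · refine mem_infix (x := d :: wordSeg s (i + 1) j) (y := []) (hall d) ?_
      rw [hw1]; simp
    · refine mem_infix (x := []) (y := wordSeg s (i + 1 + j + 1 + l + 1) j ++ [!d]) (hall (!d)) ?_
      rw [hw2]; simp
  have hns : ∀ k, i ≤ k → k < i + (m + 2) → ¬ RightSpecial s (wordSeg s k (m + 1)) :=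
    fun k h1 h2 h => hnot k h1 h2 (rightSpecial_unique hp h hd (by simp [hm]))
  have hdmem : d :: w ∈ fac s (m + 1) :=
    mem_fac.2 ⟨by simp [hm], mem_left (rightSpecial_iff.1 hd true)⟩
  obtain ⟨x, hx, y, hy, hxy, he⟩ := Finset.exists_ne_map_eq_of_card_lt_of_maps_to
    (s := Finset.Ico i (i + (m + 2))) (t := (fac s (m + 1)).erase (d :: w))
    (f := fun k => wordSeg s k (m + 1)) (by
      rw [Finset.card_erase_of_mem hdmem, card_fac, hp]; simp) (by
      intro k hk
      have hk := Finset.mem_Ico.1 hk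
      exact Finset.mem_erase.2 ⟨hnot k hk.1 hk.2, mem_fac.2 ⟨by simp, wordSeg_mem _ _⟩⟩)
  rw [Finset.mem_Ico] at hx hy
  apply not_evPeriodic hp
  rcases lt_or_gt_of_ne hxy with h | h
  · exact evPeriodic_of_loop h he fun k h1 h2 => hns k (by omega) (by omega)
  · exact evPeriodic_of_loop h he.symm fun k h1 h2 => hns k (by omega) (by omega)

/-! ### Swapping `01` and `10` after a right special factor -/

/-- Both letters occur in `s`, and each is followed by the other one somewhere. -/
lemma pair_mem (hp : ∀ n, complexity s n = n + 1) (a : Bool) : [a, !a] ∈ Factors s := by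
  obtain ⟨r, hl, hr⟩ := exists_rightSpecial (not_evPeriodic hp) 0
  obtain rfl := List.length_eq_zero_iff.1 hl
  obtain ⟨i, hi⟩ := rightSpecial_iff.1 hr a
  have hi : s i = a := by
    simpa [wordSeg] using hi.symm
  by_contra hcon
  apply not_evPeriodic hp
  have hconst : ∀ k, s (i + k) = a := by
    intro k
    induction k with
    | zero => exact hi
    | succ k ih =>
      by_contra hne
      have hne : s (i + k + 1) = !a := by
        rcases Bool.eq_or_eq_not (s (i + k + 1)) a with h | h
        · exact absurd h hne
        · exact h
      apply hcon
      have := wordSeg_mem (u := s) (i + k) 2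
      rwa [wordSeg_cons, wordSeg_cons, wordSeg_zero, ih, hne] at this
  refine ⟨i, 1, one_pos, fun k hk => ?_⟩
  obtain ⟨k, rfl⟩ := Nat.exists_eq_add_of_le hk
  rw [hconst, add_assoc, hconst]

lemma swap_base (hp : ∀ n, complexity s n = n + 1) {v : List Bool} (hv : RightSpecial s v)
    (a : Bool) : v ++ [a, !a] ∈ Factors s := by
  rw [rightSpecial_iff] at hv
  obtain ⟨c, hc⟩ := exists_ext (hv a)
  rcases Bool.eq_or_eq_not c a with rfl | rfl
  swap
  · simpa using hc
  obtain ⟨z, hz, hzm⟩ := exists_left_ext hp (pair_mem hp c) v.length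
  by_cases hzv : z = v
  · rwa [hzv] at hzm
  exfalso
  obtain ⟨x, y, b, t, rfl, rfl⟩ := exists_last_diff z v hz hzv
  rcases Bool.eq_or_eq_not b c with rfl | rfl
  · refine balanced hp t b ?_ ?_
    · exact mem_infix (x := x) (y := [!b]) hzm (by simp)
    · exact mem_infix (x := y) (y := []) (hv (!b)) (by simp)
  · refine balanced hp (t ++ [c]) c ?_ ?_
    · exact mem_infix (x := y) (y := []) hc (by simp)
    · exact mem_infix (x := x) (y := []) hzm (by simp)

/-- If `v` is right special, `v d̄ d u` is a factor and `d u d` is a factor, then `v d̄ d u d` is a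
factor. -/
lemma swap_step (hp : ∀ n, complexity s n = n + 1) {v u' : List Bool} (hv : RightSpecial s v)
    (d : Bool) (h1 : v ++ (!d) :: d :: u' ∈ Factors s) (h2 : d :: (u' ++ [d]) ∈ Factors s) :
    v ++ (!d) :: d :: (u' ++ [d]) ∈ Factors s := by
  rw [rightSpecial_iff] at hv
  obtain ⟨c, hc⟩ := exists_ext h1
  rcases Bool.eq_or_eq_not c d with rfl | rfl
  · simpa using hc
  obtain ⟨z, hz, hzm⟩ := exists_left_ext hp h2 (v ++ [!d]).length
  by_cases hzv : z = v ++ [!d]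
  · rw [hzv] at hzm; simpa using hzm
  exfalso
  obtain ⟨x, y, b, t, rfl, hy⟩ := exists_last_diff z _ hz hzv
  rcases Bool.eq_or_eq_not b d with rfl | rfl
  · refine balanced hp (t ++ b :: u') b ?_ ?_
    · exact mem_infix (x := x) (y := []) hzm (by simp)
    · refine mem_infix (x := y) (y := []) hc ?_
      have : v ++ (!b) :: b :: u' ++ [!b] = (v ++ [!b]) ++ (b :: u' ++ [!b]) := by simp
      rw [this, hy]; simp
  · rcases List.eq_nil_or_concat t with rfl | ⟨t', c, rfl⟩
    · have := (List.append_inj' hy rfl).2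
      simp at this
    · have hy' : v ++ [!d] = (y ++ (!!d) :: t') ++ [c] := by rw [hy]; simp
      obtain ⟨rfl, hcd⟩ := List.append_inj' hy' rfl
      obtain rfl : (!d) = c := by simpa using hcd
      refine balanced hp t' d ?_ ?_
      · exact mem_infix (x := y) (y := []) (hv d) (by simp)
      · exact mem_infix (x := x) (y := d :: (u' ++ [d])) hzm (by simp)

lemma exists_swap (hp : ∀ n, complexity s n = n + 1) {v : List Bool} (hv : RightSpecial s v)
    (m : ℕ) : ∃ u', u'.length = m ∧ ∀ a, v ++ a :: (!a) :: u' ∈ Factors s := by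
  induction m with
  | zero => exact ⟨[], rfl, fun a => swap_base hp hv a⟩
  | succ m ih =>
    obtain ⟨u', hl, hu⟩ := ih
    by_cases hr : RightSpecial s u'
    · obtain ⟨d, hd⟩ := exists_cons_rightSpecial hp hr
      have hdd : d :: (u' ++ [d]) ∈ Factors s := rightSpecial_iff.1 hd d
      have h1 := swap_step hp hv d (by simpa using hu (!d)) hdd
      refine ⟨u' ++ [d], by simp [hl], fun a => ?_⟩
      rcases Bool.eq_or_eq_not a d with rfl | rfl
      · obtain ⟨c, hc⟩ := exists_ext (hu a)
        rcases Bool.eq_or_eq_not c a with rfl | rfl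
        · simpa using hc
        · exact (balanced hp u' a hdd
            (mem_infix (x := v ++ [a]) (y := []) hc (by simp))).elim
      · simpa using h1
    · obtain ⟨c, hc⟩ := exists_ext (hu true)
      obtain ⟨c', hc'⟩ := exists_ext (hu false)
      have hcc : c = c' := by
        by_contra hne
        exact hr ⟨c, c', hne, mem_infix (x := v ++ [true, false]) (y := []) hc (by simp),
          mem_infix (x := v ++ [false, true]) (y := []) hc' (by simp)⟩
      subst hcc
      refine ⟨u' ++ [c], by simp [hl], fun a => ?_⟩
      cases a
      · simpa using hc'
      · simpa using hc

/-! ### The factorization -/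

/-- If no proper prefix of `x ++ y` of length at least `|x|` is right special, then `x` has only
one extension of that length. -/
lemma ext_unique {y : List Bool} : ∀ {x y' : List Bool}, y.length = y'.length →
    x ++ y ∈ Factors s → x ++ y' ∈ Factors s →
    (∀ p q, y = p ++ q → q ≠ [] → ¬ RightSpecial s (x ++ p)) → y = y' := by
  induction y with
  | nil => intro x y' hl _ _ _; exact (List.length_eq_zero_iff.1 hl.symm).symm
  | cons a y ih =>
    intro x y' hl h1 h2 hns
    cases y' with
    | nil => simp at hl
    | cons b y' =>
      have hab : a = b := by
        by_contra hne
        refine hns [] (a :: y) rfl (by simp) ⟨a, b, hne, ?_, ?_⟩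
        · exact mem_infix (x := []) (y := y) h1 (by simp)
        · exact mem_infix (x := []) (y := y') h2 (by simp)
      subst hab
      rw [ih (x := x ++ [a]) (by simpa using hl) (by simpa using h1) (by simpa using h2)]
      intro p q e hq
      have := hns (a :: p) q (by simp [e]) hq
      simpa using this

/-- The longest right special proper prefix of a nonempty word. -/
lemma exists_longest_prefix (h0 : RightSpecial s []) : ∀ w : List Bool, w ≠ [] →
    ∃ v a y, w = v ++ a :: y ∧ RightSpecial s v ∧
      ∀ p q, y = p ++ q → q ≠ [] → ¬ RightSpecial s (v ++ [a] ++ p) := by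
  intro w
  induction w using List.reverseRecOn with
  | nil => intro h; exact absurd rfl h
  | append_singleton w c ih =>
    intro _
    by_cases hr : RightSpecial s w
    · refine ⟨w, c, [], rfl, hr, fun p q e hq => ?_⟩
      exact absurd (List.append_eq_nil_iff.1 e.symm).2 hq
    · obtain ⟨v, a, y, rfl, hv, hns⟩ := ih (by rintro rfl; exact hr h0)
      refine ⟨v, a, y ++ [c], by simp, hv, fun p q e hq => ?_⟩
      rcases List.eq_nil_or_concat q with rfl | ⟨q', c', rfl⟩
      · exact absurd rfl hq
      · have e' : y ++ [c] = (p ++ q') ++ [c'] := by simpa using e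
        obtain ⟨rfl, -⟩ := List.append_inj' e' rfl
        by_cases hqne : q' = []
        · subst hqne; simpa using hr
        · exact hns p q' rfl hqne

/-- A language in which the words of length `n` have the form `f a v`, for a letter `a` and a single
word `v`, has at most two words of that length. -/
lemma ncard_le_two (L : Set (List Bool)) (n : ℕ) (f : Bool → List Bool → List Bool)
    (P : List Bool → Prop) (hL : ∀ w ∈ L, w.length = n → ∃ v a, P v ∧ w = f a v)
    (hP : ∀ w ∈ L, w.length = n → ∀ w' ∈ L, w'.length = n → ∀ v v' a a', P v → P v' → w = f a v →
      w' = f a' v' → v = v') : langComplexity L n ≤ 2 := by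
  unfold langComplexity
  rcases Set.eq_empty_or_nonempty {w ∈ L | w.length = n} with h | ⟨w, hw, hwl⟩
  · rw [h]; simp
  · obtain ⟨v, a, hv, e⟩ := hL w hw hwl
    have hsub : {w ∈ L | w.length = n} ⊆ {f true v, f false v} := by
      rintro w' ⟨hw', hwl'⟩
      obtain ⟨v', a', hv', e'⟩ := hL w' hw' hwl'
      obtain rfl := hP w hw hwl w' hw' hwl' v v' a a' hv hv' e e'
      cases a' <;> simp [e']
    exact (Set.ncard_le_ncard hsub (by simp)).trans
      ((Set.ncard_insert_le _ _).trans (by simp))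

end Sturmian

open Sturmian

/-- a Sturmian word `s` (a word over `{0,1}` with `p_s(n) = n+1` for all `n`)
belongs to `𝓦₂`: with `S₁ = {va : v right special} ∪ {ε}` and
`S₂ = {av : v left special} ∪ {ε}`, each of `S₁`, `S₂` has at most 2 words of each length
`n ≥ 1`, and every factor of `s` lies in `S₁·S₂`. -/
theorem stmt12 (s : ℕ → Bool) (hp : ∀ n, complexity s n = n + 1) :
    (∀ n, 1 ≤ n →
      langComplexity ({w : List Bool | ∃ v a, RightSpecial s v ∧ w = v ++ [a]} ∪ {[]}) n ≤ 2) ∧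
    (∀ n, 1 ≤ n →
      langComplexity ({w : List Bool | ∃ v a, LeftSpecial s v ∧ w = a :: v} ∪ {[]}) n ≤ 2) ∧
    (∀ w ∈ Factors s,
      ∃ s₁ ∈ ({w : List Bool | ∃ v a, RightSpecial s v ∧ w = v ++ [a]} ∪ {[]} : Set (List Bool)),
        ∃ s₂ ∈ ({w : List Bool | ∃ v a, LeftSpecial s v ∧ w = a :: v} ∪ {[]} : Set (List Bool)),
          w = s₁ ++ s₂) := by
  refine ⟨fun n hn => ?_, fun n hn => ?_, fun w hw => ?_⟩
  · apply ncard_le_two _ n (fun a v => v ++ [a]) (RightSpecial s)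
    · rintro w (h | rfl) hl
      · exact h
      · simp at hl; omega
    · rintro w - hl w' - hl' v v' a a' hv hv' rfl rfl
      refine rightSpecial_unique hp hv hv' ?_
      simp at hl hl'; omega
  · apply ncard_le_two _ n (fun a v => a :: v) (LeftSpecial s)
    · rintro w (h | rfl) hl
      · exact h
      · simp at hl; omega
    · rintro w - hl w' - hl' v v' a a' hv hv' rfl rfl
      refine leftSpecial_unique hp hv hv' ?_
      simp at hl hl'; omega
  · by_cases hw0 : w = []
    · exact ⟨[], Or.inr rfl, [], Or.inr rfl, by simp [hw0]⟩
    obtain ⟨r, hl, hr⟩ := exists_rightSpecial (not_evPeriodic hp) 0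
    obtain rfl := List.length_eq_zero_iff.1 hl
    obtain ⟨v, a, y, rfl, hv, hns⟩ := exists_longest_prefix hr w hw0
    refine ⟨v ++ [a], Or.inl ⟨v, a, hv, rfl⟩, y, ?_, by simp⟩
    cases y with
    | nil => exact Or.inr rfl
    | cons b y =>
      obtain ⟨u', hlu, hu⟩ := exists_swap hp hv y.length
      have e : b :: y = (!a) :: u' :=
        ext_unique (x := v ++ [a]) (by simp [hlu]) (by simpa using hw) (by simpa using hu a) hns
      rw [e]
      refine Or.inl ⟨u', !a, leftSpecial_iff.2 fun c => ?_, rfl⟩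
      exact mem_infix (x := v ++ [!c]) (y := []) (hu (!c)) (by simp)
end

section
/- Let f : ℕ_{>0} → ℕ be a nondecreasing function with f(1) ≥ 1, f(n) ≤ n for all n, and f(n) → ∞ as n → ∞. Then there exists an infinite word w over {a,b} with p_w(n) = O(n² f(n)) such that for every integer k ≥ 1, w ∉ 𝓦_k: there are no languages S_1, …, S_k with p_{S_i}(n) = O(1) for each i such that every factor of w belongs to S_1⋯S_k. -/
namespace Blocks

/-! ### The word -/

/-- The number of periods in a block with parameter `j`. -/
def rep (j : ℕ) : ℕ := (Nat.unpair j).2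

/-- The length of the block with index `t = Nat.pair i j`; blocks with inadmissible parameters are
empty. -/
def len (f : ℕ → ℕ) (t : ℕ) : ℕ :=
  if 1 ≤ t.unpair.1 ∧ 1 ≤ t.unpair.2 ∧ t.unpair.2 ≤ f t.unpair.1 then
    (t.unpair.1 + t.unpair.2) * rep t.unpair.2 else 0

/-- The position at which the block with index `t` starts. -/
def pos (f : ℕ → ℕ) : ℕ → ℕ
  | 0 => 0
  | t + 1 => 2 * (pos f t + len f t)

/-- The predicate that position `p` carries the letter `b`. -/
def isB (f : ℕ → ℕ) (p : ℕ) : Prop :=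
  ∃ t, pos f t ≤ p ∧ p - pos f t < len f t ∧
    t.unpair.1 ≤ (p - pos f t) % (t.unpair.1 + t.unpair.2)

open Classical in
/-- The infinite word built from the blocks, with `true` for `b` and `false` for `a`. -/
noncomputable def word (f : ℕ → ℕ) (p : ℕ) : Bool := decide (isB f p)

lemma word_eq_true (f : ℕ → ℕ) (p : ℕ) : word f p = true ↔ isB f p := by simp [word]

lemma pos_lt (f : ℕ → ℕ) {t t' : ℕ} (h : t < t') : 2 * (pos f t + len f t) ≤ pos f t' := by
  induction t', h using Nat.le_induction with
  | base => simp [pos]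
  | succ n _ ih => simp only [pos]; omega

lemma isB_block (f : ℕ → ℕ) (t q : ℕ) (hq : q < len f t) :
    isB f (pos f t + q) ↔ t.unpair.1 ≤ q % (t.unpair.1 + t.unpair.2) := by
  constructor
  · rintro ⟨t', h1, h2, h3⟩
    rcases lt_trichotomy t t' with h | h | h
    · have := pos_lt f h; omega
    · subst h; simpa using h3
    · have := pos_lt f h; omega
  · intro h
    exact ⟨t, by omega, by simpa using hq, by simpa using h⟩

/-- A window starting at a position at least its length meets at most one block. -/
lemma unique_block (f : ℕ → ℕ) {s n t t' : ℕ} (hs : n ≤ s)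
    (h1 : s < pos f t + len f t) (h2 : pos f t < s + n)
    (h3 : s < pos f t' + len f t') (h4 : pos f t' < s + n) : t = t' := by
  rcases lt_trichotomy t t' with h | h | h
  · have := pos_lt f h; omega
  · exact h
  · have := pos_lt f h; omega

/-! ### Counting factors -/

open Classical in
/-- The word of length `n` with letter `b` exactly at the positions satisfying `φ`. -/
noncomputable def predWord (n : ℕ) (φ : ℕ → Prop) : List Bool :=
  (List.range n).map (fun t => decide (φ t))

lemma wordSeg_eq_predWord (f : ℕ → ℕ) (s n : ℕ) (φ : ℕ → Prop)
    (h : ∀ t < n, isB f (s + t) ↔ φ t) : wordSeg (word f) s n = predWord n φ := by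
  unfold wordSeg predWord
  apply List.map_congr_left
  intro t ht
  rw [List.mem_range] at ht
  exact decide_eq_decide.2 (h t ht)

lemma exists_interval (n : ℕ) (φ : ℕ → Prop)
    (h : ∀ p q r, p ≤ q → q ≤ r → r < n → φ p → φ r → φ q) :
    ∃ x ≤ n, ∃ y ≤ n, ∀ t < n, φ t ↔ x ≤ t ∧ t < y := by
  induction n with
  | zero => exact ⟨0, le_rfl, 0, le_rfl, by omega⟩
  | succ n ih =>
    obtain ⟨x, hx, y, hy, hxy⟩ := ih (fun p q r a b c => h p q r a b (by omega))
    by_cases hn : φ n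
    · by_cases he : x < y
      · refine ⟨x, by omega, n + 1, le_rfl, fun t ht => ⟨fun ht' => ⟨?_, ht⟩, fun ht' => ?_⟩⟩
        · by_contra hc
          have := (hxy t (by omega)).1 ht'
          omega
        · exact h x t n ht'.1 (by omega) (by omega) ((hxy x (by omega)).2 ⟨le_rfl, he⟩) hn
      · refine ⟨n, by omega, n + 1, le_rfl, fun t ht => ?_⟩
        rcases Nat.lt_succ_iff_lt_or_eq.1 ht with h' | h'
        · rw [hxy t h']; omega
        · subst h'; simp [hn]
    · refine ⟨x, by omega, y, by omega, fun t ht => ?_⟩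
      rcases Nat.lt_succ_iff_lt_or_eq.1 ht with h' | h'
      · exact hxy t h'
      · subst h'; simp only [hn, false_iff]; omega

/-- Two letters `b` of `(a^i b^j)^m` at distance less than `i` lie in the same run of `b`. -/
lemma mod_convex {i j p q r : ℕ} (hpq : p ≤ q) (hqr : q ≤ r) (hpr : r < p + i)
    (hp : i ≤ p % (i + j)) (hr : i ≤ r % (i + j)) : i ≤ q % (i + j) := by
  have e1 := Nat.mod_add_div p (i + j)
  have e2 := Nat.mod_add_div r (i + j)
  have l1 := Nat.mod_lt p (show i + j > 0 by omega)
  have l2 := Nat.mod_lt r (show i + j > 0 by omega)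
  have hdiv : p / (i + j) = r / (i + j) := by
    apply le_antisymm (Nat.div_le_div_right (by omega))
    by_contra hc
    have : (i + j) * (p / (i + j) + 1) ≤ (i + j) * (r / (i + j)) :=
      Nat.mul_le_mul_left _ (by omega)
    rw [Nat.mul_add] at this
    omega
  have hdq : q / (i + j) = p / (i + j) := by
    apply le_antisymm
    · rw [hdiv]; exact Nat.div_le_div_right hqr
    · exact Nat.div_le_div_right hpq
  have e3 := Nat.mod_add_div q (i + j)
  rw [hdq] at e3
  omega

/-- A finite set of words containing all factors of length `n`. Its parts are, in order: the factors
starting before position `n`; the words `a^x b^y a^z`; the windows inside a block with `i ≤ n`; the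
windows starting before such a block; the windows starting inside and ending after such a block. -/
noncomputable def candidates (f : ℕ → ℕ) (n : ℕ) : Finset (List Bool) :=
  (Finset.range n).image (fun s => wordSeg (word f) s n) ∪
  (Finset.range (n + 1) ×ˢ Finset.range (n + 1)).image
    (fun z => predWord n (fun t => z.1 ≤ t ∧ t < z.2)) ∪
  (Finset.range (n + 1) ×ˢ Finset.range (f n + 1) ×ˢ Finset.range (2 * n)).image
    (fun z => predWord n (fun t => z.1 ≤ (z.2.2 + t) % (z.1 + z.2.1))) ∪
  (Finset.range (n + 1) ×ˢ Finset.range (f n + 1) ×ˢ Finset.range (n + 1)).image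
    (fun z => predWord n (fun t => z.2.2 ≤ t ∧ t - z.2.2 < (z.1 + z.2.1) * rep z.2.1 ∧
      z.1 ≤ (t - z.2.2) % (z.1 + z.2.1))) ∪
  (Finset.range (n + 1) ×ˢ Finset.range (f n + 1) ×ˢ Finset.range (n + 1)).image
    (fun z => predWord n (fun t => t < z.2.2 ∧
      z.1 ≤ ((z.1 + z.2.1) * rep z.2.1 - z.2.2 + t) % (z.1 + z.2.1)))

lemma card_candidates (f : ℕ → ℕ) (n : ℕ) (hn : 1 ≤ n) (hf : 1 ≤ f n) :
    (candidates f n).card ≤ 29 * (n ^ 2 * f n) := by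
  have h : (candidates f n).card ≤ n + (n + 1) * (n + 1) + (n + 1) * ((f n + 1) * (2 * n)) +
      (n + 1) * ((f n + 1) * (n + 1)) + (n + 1) * ((f n + 1) * (n + 1)) := by
    unfold candidates
    refine (Finset.card_union_le _ _).trans (Nat.add_le_add ?_ ?_)
    · refine (Finset.card_union_le _ _).trans (Nat.add_le_add ?_ ?_)
      · refine (Finset.card_union_le _ _).trans (Nat.add_le_add ?_ ?_)
        · refine (Finset.card_union_le _ _).trans (Nat.add_le_add ?_ ?_)
          · exact Finset.card_image_le.trans (by simp)
          · exact Finset.card_image_le.trans (by simp)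
        · exact Finset.card_image_le.trans (by simp)
      · exact Finset.card_image_le.trans (by simp)
    · exact Finset.card_image_le.trans (by simp)
  refine h.trans ?_
  obtain ⟨a, ha⟩ := Nat.exists_eq_add_of_le hn
  obtain ⟨b, hb⟩ := Nat.exists_eq_add_of_le hf
  rw [hb]
  subst ha
  ring_nf
  nlinarith [Nat.zero_le (a * b), Nat.zero_le (a ^ 2 * b), Nat.zero_le (a^2)]

lemma factor_mem (f : ℕ → ℕ) (hmono : ∀ m n, 1 ≤ m → m ≤ n → f m ≤ f n)
    (hle : ∀ n, 1 ≤ n → f n ≤ n) (n : ℕ) (hn : 1 ≤ n) (s : ℕ) :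
    wordSeg (word f) s n ∈ candidates f n := by
  unfold candidates
  simp only [Finset.mem_union, Finset.mem_image, Finset.mem_range, Finset.mem_product, Prod.exists]
  by_cases hs : s < n
  · exact Or.inl <| Or.inl <| Or.inl <| Or.inl ⟨s, hs, rfl⟩
  push Not at hs
  by_cases hex : ∃ t, s < pos f t + len f t ∧ pos f t < s + n
  swap
  · refine Or.inl <| Or.inl <| Or.inl <| Or.inr ⟨0, 0, by omega, ?_⟩
    refine (wordSeg_eq_predWord f s n _ fun t ht => ?_).symm
    constructor
    · rintro ⟨t', h1, h2, h3⟩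
      exact (hex ⟨t', by omega, by omega⟩).elim
    · omega
  obtain ⟨T, hT1, hT2⟩ := hex
  have key : ∀ t < n, isB f (s + t) ↔ pos f T ≤ s + t ∧ s + t - pos f T < len f T ∧
      T.unpair.1 ≤ (s + t - pos f T) % (T.unpair.1 + T.unpair.2) := by
    intro t ht
    constructor
    · rintro ⟨t', h1, h2, h3⟩
      obtain rfl := unique_block f hs hT1 hT2 (t' := t') (by omega) (by omega)
      exact ⟨h1, h2, h3⟩
    · exact fun h => ⟨T, h⟩
  by_cases hv : 1 ≤ T.unpair.1 ∧ 1 ≤ T.unpair.2 ∧ T.unpair.2 ≤ f T.unpair.1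
  swap
  · refine Or.inl <| Or.inl <| Or.inl <| Or.inr ⟨0, 0, by omega, ?_⟩
    refine (wordSeg_eq_predWord f s n _ fun t ht => ?_).symm
    rw [key t ht]
    simp [len, hv]
  have hlen : len f T = (T.unpair.1 + T.unpair.2) * rep T.unpair.2 := by simp [len, hv]
  generalize pos f T = P at *
  generalize T.unpair.1 = i at *
  generalize T.unpair.2 = j at *
  generalize len f T = l at *
  obtain ⟨hi, hj, hji⟩ := hv
  by_cases hin : n < i
  · refine Or.inl <| Or.inl <| Or.inl <| Or.inr ?_
    obtain ⟨x, hx, y, hy, hxy⟩ := exists_interval n (fun t => isB f (s + t)) (by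
      intro p q r hpq hqr hr hp hr'
      rw [key _ (by omega)] at hp hr' ⊢
      refine ⟨by omega, by omega, ?_⟩
      exact mod_convex (p := s + p - P) (r := s + r - P) (by omega) (by omega) (by omega)
        hp.2.2 hr'.2.2)
    exact ⟨x, y, by omega, (wordSeg_eq_predWord f s n _ hxy).symm⟩
  push Not at hin
  have hfn : f i ≤ f n := hmono i n hi hin
  have hfi := hle i hi
  by_cases h1 : s < P
  · refine Or.inl <| Or.inr ⟨i, j, P - s, by omega, ?_⟩
    refine (wordSeg_eq_predWord f s n _ fun t ht => ?_).symm
    rw [key t ht, hlen]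
    have : t - (P - s) = s + t - P := by omega
    simp only [this]
    have : P - s ≤ t ↔ P ≤ s + t := by omega
    rw [this]
  push Not at h1
  by_cases h2 : s + n ≤ P + l
  · refine Or.inl <| Or.inl <| Or.inr ⟨i, j, (s - P) % (i + j), ⟨by omega, by omega, ?_⟩, ?_⟩
    · have := Nat.mod_lt (s - P) (show i + j > 0 by omega)
      omega
    refine (wordSeg_eq_predWord f s n _ fun t ht => ?_).symm
    rw [key t ht, Nat.mod_add_mod]
    have : s - P + t = s + t - P := by omega
    rw [this]
    exact ⟨fun h => h.2.2, fun h => ⟨by omega, by omega, h⟩⟩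
  · refine Or.inr ⟨i, j, P + l - s, by omega, ?_⟩
    refine (wordSeg_eq_predWord f s n _ fun t ht => ?_).symm
    rw [key t ht, ← hlen]
    have : l - (P + l - s) + t = s + t - P := by omega
    rw [this]
    constructor
    · exact fun h => ⟨by omega, h.2.2⟩
    · exact fun h => ⟨by omega, by omega, h.2⟩

lemma complexity_le (f : ℕ → ℕ) (hf1 : 1 ≤ f 1)
    (hmono : ∀ m n, 1 ≤ m → m ≤ n → f m ≤ f n) (hle : ∀ n, 1 ≤ n → f n ≤ n)
    (n : ℕ) (hn : 1 ≤ n) : complexity (word f) n ≤ 29 * (n ^ 2 * f n) := by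
  refine le_trans ?_ (card_candidates f n hn (hf1.trans (hmono 1 n le_rfl hn)))
  rw [← Set.ncard_coe_finset]
  refine Set.ncard_le_ncard ?_ (Finset.finite_toSet _)
  rintro v ⟨rfl, s, hs⟩
  rw [hs]
  have := factor_mem f hmono hle v.length hn s
  simpa [wordSeg] using this

/-! ### Decomposing blocks -/

lemma exists_mod_eq_pred (e p : ℕ) (hp : 1 ≤ p) : ∃ t < p, (e + t) % p = p - 1 := by
  refine ⟨p - 1 - e % p, by omega, ?_⟩
  have h := Nat.mod_lt e hp
  rw [← Nat.mod_add_mod]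
  have : e % p + (p - 1 - e % p) = p - 1 := by omega
  rw [this]
  exact Nat.mod_eq_of_lt (by omega)

/-- A window of `(a^i b^j)^ω` of length at least three periods determines `i` and `j`. -/
lemma periodic_inj {i j i' j' e e' L : ℕ} (hi : 1 ≤ i) (hj : 1 ≤ j) (hi' : 1 ≤ i') (hj' : 1 ≤ j')
    (hL : 3 * (i + j) ≤ L) (hL' : 3 * (i' + j') ≤ L)
    (h : ∀ t < L, i ≤ (e + t) % (i + j) ↔ i' ≤ (e' + t) % (i' + j')) : i = i' ∧ j = j' := by
  obtain ⟨t, ht, hte⟩ := exists_mod_eq_pred e (i + j) (by omega)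
  have succ_mod : ∀ x p : ℕ, 1 ≤ p → (x + 1) % p = if x % p + 1 = p then 0 else x % p + 1 := by
    intro x p hp
    have hx := Nat.mod_lt x hp
    rw [← Nat.mod_add_mod]
    split_ifs with hc
    · rw [hc, Nat.mod_self]
    · exact Nat.mod_eq_of_lt (by omega)
  -- Position `t` ends a run of `b` in both words, so both phases vanish at `t + 1`.
  have z : (e + (t + 1)) % (i + j) = 0 := by
    rw [← Nat.add_assoc, succ_mod _ _ (by omega), if_pos (by omega)]
  have z' : (e' + (t + 1)) % (i' + j') = 0 := by
    have a := h t (by omega)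
    have b := h (t + 1) (by omega)
    rw [z] at b
    rw [← Nat.add_assoc, succ_mod _ _ (by omega)] at b ⊢
    split_ifs at b ⊢ <;> omega
  have h' : ∀ u, u + (t + 1) < L → (i ≤ u % (i + j) ↔ i' ≤ u % (i' + j')) := by
    intro u hu
    have := h (t + 1 + u) (by omega)
    rwa [← Nat.add_assoc, ← Nat.add_assoc e', ← Nat.mod_add_mod, ← Nat.mod_add_mod _ (i' + j'),
      z, z', Nat.zero_add] at this
  have m1 : i % (i + j) = i := Nat.mod_eq_of_lt (by omega)
  have m2 : i' % (i' + j') = i' := Nat.mod_eq_of_lt (by omega)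
  have hii : i = i' := by
    rcases lt_trichotomy i i' with hc | hc | hc
    · have := h' i (by omega)
      rw [m1, Nat.mod_eq_of_lt (show i < i' + j' by omega)] at this
      omega
    · exact hc
    · have := h' i' (by omega)
      rw [m2, Nat.mod_eq_of_lt (show i' < i + j by omega)] at this
      omega
  subst hii
  refine ⟨rfl, ?_⟩
  rcases lt_trichotomy j j' with hc | hc | hc
  · have := h' (i + j) (by omega)
    rw [Nat.mod_self, Nat.mod_eq_of_lt (show i + j < i + j' by omega)] at this
    omega
  · exact hc
  · have := h' (i + j') (by omega)
    rw [Nat.mod_self, Nat.mod_eq_of_lt (show i + j' < i + j by omega)] at this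
    omega

/-- The word `v` is a window of `(a^i b^j)^ω` of length at least three periods. -/
def LongWindow (v : List Bool) (i j : ℕ) : Prop :=
  3 * (i + j) ≤ v.length ∧
    ∃ e, ∀ t (h : t < v.length), v[t] = true ↔ i ≤ (e + t) % (i + j)

lemma LongWindow.inj {v : List Bool} {i j i' j' : ℕ} (hi : 1 ≤ i) (hj : 1 ≤ j) (hi' : 1 ≤ i')
    (hj' : 1 ≤ j') (h : LongWindow v i j) (h' : LongWindow v i' j') : i = i' ∧ j = j' := by
  obtain ⟨hL, e, he⟩ := h
  obtain ⟨hL', e', he'⟩ := h'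
  exact periodic_inj hi hj hi' hj' hL hL' fun t ht => (he t ht).symm.trans (he' t ht)

/-- If the factors lie in `S_1 ⋯ S_k`, then some `S_r` contains a long window of the block with
parameters `i`, `j` and `3k` periods. -/
lemma exists_piece (f : ℕ → ℕ) (k : ℕ) (hk : 1 ≤ k) (S : Fin k → Set (List Bool))
    (hS : ∀ v ∈ Factors (word f), ∃ s : Fin k → List Bool,
      (∀ i, s i ∈ S i) ∧ v = (List.ofFn s).flatten)
    (i j : ℕ) (hi : 1 ≤ i) (hj : 1 ≤ j) (hji : j ≤ f i) (hrep : rep j = 3 * k) :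
    ∃ z : Fin k × List Bool, z.2 ∈ S z.1 ∧ z.2.length ≤ (i + j) * (3 * k) ∧
      LongWindow z.2 i j := by
  set T := Nat.pair i j with hT
  have hT1 : T.unpair.1 = i := by simp [T]
  have hT2 : T.unpair.2 = j := by simp [T]
  have hlen : len f T = (i + j) * (3 * k) := by
    simp [len, hT1, hT2, hi, hj, hji, hrep]
  obtain ⟨s, hs, hv⟩ := hS (wordSeg (word f) (pos f T) (len f T))
    ⟨pos f T, by simp [wordSeg]⟩
  have hsum : (i + j) * (3 * k) = ∑ r, (s r).length := by
    have := congrArg List.length hv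
    rw [List.length_flatten, List.map_ofFn, List.sum_ofFn] at this
    simpa [wordSeg, hlen] using this
  obtain ⟨r, hr⟩ : ∃ r, 3 * (i + j) ≤ (s r).length := by
    by_contra hc
    push Not at hc
    have : ∑ r, (s r).length < ∑ _r : Fin k, 3 * (i + j) :=
      Finset.sum_lt_sum_of_nonempty ⟨⟨0, hk⟩, Finset.mem_univ _⟩ fun r _ => hc r
    simp only [Finset.sum_const, Finset.card_univ, Fintype.card_fin, smul_eq_mul] at this
    rw [← hsum] at this
    nlinarith
  obtain ⟨l₁, l₂, hl⟩ := List.append_of_mem (show s r ∈ List.ofFn s by simp)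
  rw [hl, List.flatten_append, List.flatten_cons] at hv
  have hlv := congrArg List.length hv
  simp only [wordSeg, List.length_map, List.length_range, List.length_append] at hlv
  refine ⟨(r, s r), hs r, by simp only; omega, hr, l₁.flatten.length, fun t ht => ?_⟩
  simp only at ht ⊢
  have e1 : (s r)[t] = (wordSeg (word f) (pos f T) (len f T))[l₁.flatten.length + t]'(by
      simp only [wordSeg, List.length_map, List.length_range]; omega) := by
    simp only [hv]
    rw [List.getElem_append_right (by omega), List.getElem_append_left (by omega)]
    congr 1; omega
  rw [e1]
  simp only [wordSeg, List.getElem_map, List.getElem_range]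
  rw [word_eq_true, isB_block f T _ (by omega), hT1, hT2]

/-- There are at most `C k (B + 1)` pairs `(r, v)` with `v ∈ S r` and `|v| ≤ B`, since there are at
most `C` for each `r` and each length. -/
lemma card_pieces_le (k C B : ℕ) (S : Fin k → Set (List Bool))
    (hC : ∀ i n, langComplexity (S i) n ≤ C) (A : Finset (Fin k × List Bool))
    (hA : ∀ z ∈ A, z.2 ∈ S z.1 ∧ z.2.length ≤ B) : A.card ≤ C * (k * (B + 1)) := by
  classical
  have := Finset.card_le_mul_card_image_of_maps_to (s := A)
    (t := (Finset.univ : Finset (Fin k)) ×ˢ Finset.range (B + 1))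
    (f := fun z => (z.1, z.2.length)) (by
      intro z hz
      simpa [Nat.lt_succ_iff] using (hA z hz).2) C (by
      rintro ⟨r, n⟩ -
      refine le_trans ?_ (hC r n)
      unfold langComplexity
      rw [← Set.ncard_coe_finset]
      refine Set.ncard_le_ncard_of_injOn Prod.snd ?_ ?_ ?_
      · rintro ⟨r', v⟩ hz
        simp only [Finset.coe_filter, Set.mem_ofPred_eq, Prod.mk.injEq] at hz
        obtain ⟨hz, rfl, rfl⟩ := hz
        exact ⟨(hA _ hz).1, rfl⟩
      · rintro ⟨r', v⟩ hz ⟨r'', v'⟩ hz' hvv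
        simp only [Finset.coe_filter, Set.mem_ofPred_eq, Prod.mk.injEq] at hz hz' hvv ⊢
        exact ⟨hz.2.1.trans hz'.2.1.symm, hvv⟩
      · exact (List.finite_length_eq Bool n).subset fun v hv => hv.2)
  simpa using this

lemma not_in_product (f : ℕ → ℕ) (hmono : ∀ m n, 1 ≤ m → m ≤ n → f m ≤ f n)
    (hle : ∀ n, 1 ≤ n → f n ≤ n) (htop : Filter.Tendsto f Filter.atTop Filter.atTop)
    (k : ℕ) (hk : 1 ≤ k) (S : Fin k → Set (List Bool))
    (hbd : ∀ i, ∃ C : ℕ, ∀ n, langComplexity (S i) n ≤ C)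
    (hS : ∀ v ∈ Factors (word f), ∃ s : Fin k → List Bool,
      (∀ i, s i ∈ S i) ∧ v = (List.ofFn s).flatten) : False := by
  classical
  choose C' hC' using hbd
  set C := ∑ i, C' i
  have hC : ∀ i n, langComplexity (S i) n ≤ C := fun i n =>
    (hC' i n).trans (Finset.single_le_sum (fun _ _ => Nat.zero_le _) (Finset.mem_univ i))
  set Q := 13 * C * k ^ 2 + 1 with hQ
  obtain ⟨N, hN1, hN⟩ : ∃ N, 1 ≤ N ∧ ∀ c < Q, Nat.pair c (3 * k) ≤ f N := by
    obtain ⟨N, h1, h2⟩ := ((Filter.eventually_ge_atTop 1).and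
      (htop.eventually_ge_atTop (∑ c ∈ Finset.range Q, Nat.pair c (3 * k)))).exists
    exact ⟨N, h1, fun c hc => (Finset.single_le_sum (f := fun c => Nat.pair c (3 * k))
      (fun _ _ => Nat.zero_le _) (Finset.mem_range.2 hc)).trans h2⟩
  have piece : ∀ x : ℕ × ℕ, ∃ z : Fin k × List Bool, x ∈ Finset.Ico N (2 * N) ×ˢ Finset.range Q →
      (z.2 ∈ S z.1 ∧ z.2.length ≤ 12 * N * k) ∧ LongWindow z.2 x.1 (Nat.pair x.2 (3 * k)) := by
    rintro ⟨i, c⟩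
    by_cases hx : (i, c) ∈ Finset.Ico N (2 * N) ×ˢ Finset.range Q
    swap
    · exact ⟨(⟨0, hk⟩, []), fun h => (hx h).elim⟩
    have hx' := hx
    simp only [Finset.mem_product, Finset.mem_Ico, Finset.mem_range] at hx'
    have hj1 : 1 ≤ Nat.pair c (3 * k) := le_trans (by omega) (Nat.right_le_pair c (3 * k))
    have hjf : Nat.pair c (3 * k) ≤ f i := (hN c hx'.2).trans (hmono N i hN1 hx'.1.1)
    have hji := hle i (by omega)
    obtain ⟨z, h1, h2, h3⟩ := exists_piece f k hk S hS i (Nat.pair c (3 * k)) (by omega) hj1 hjf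
      (by simp [rep])
    refine ⟨z, fun _ => ⟨⟨h1, h2.trans ?_⟩, h3⟩⟩
    calc (i + Nat.pair c (3 * k)) * (3 * k) ≤ (4 * N) * (3 * k) :=
          Nat.mul_le_mul_right _ (by omega)
      _ = 12 * N * k := by ring
  choose g hg using piece
  set D := Finset.Ico N (2 * N) ×ˢ Finset.range Q with hD
  have hinj : Set.InjOn g (D : Set (ℕ × ℕ)) := by
    rintro ⟨i, c⟩ hx ⟨i', c'⟩ hx' hgg
    have a := (hg _ hx).2
    have b := (hg _ hx').2
    rw [← hgg] at b
    have hj : ∀ c, 1 ≤ Nat.pair c (3 * k) := fun c =>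
      le_trans (by omega) (Nat.right_le_pair c (3 * k))
    simp only [hD, Finset.coe_product, Set.mem_prod, Finset.coe_Ico, Set.mem_Ico] at hx hx'
    obtain ⟨rfl, h⟩ := LongWindow.inj (by simp only; omega) (hj _) (by simp only; omega) (hj _) a b
    simp only [Nat.pair_eq_pair] at h
    rw [h.1]
  have hcard := card_pieces_le k C (12 * N * k) S hC (D.image g) (by
    intro z hz
    obtain ⟨x, hx, rfl⟩ := Finset.mem_image.1 hz
    exact (hg x hx).1)
  rw [Finset.card_image_of_injOn hinj] at hcard
  have hDc : D.card = N * Q := by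
    simp only [hD, Finset.card_product, Nat.card_Ico, Finset.card_range]
    congr 1; omega
  rw [hDc, hQ] at hcard
  have hNk : 1 ≤ N * k := Nat.mul_pos hN1 hk
  have : C * (k * (12 * N * k + 1)) ≤ C * (k * (13 * (N * k))) :=
    Nat.mul_le_mul_left _ (Nat.mul_le_mul_left _ (by nlinarith))
  nlinarith

end Blocks

/-- for any nondecreasing `f` with `f(1) ≥ 1`, `f(n) ≤ n` and `f(n) → ∞`,
there is an infinite word `w` of complexity `O(n² f(n))` which belongs to no `𝓦_k`. -/
theorem stmt17 (f : ℕ → ℕ) (hf1 : 1 ≤ f 1)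
    (hmono : ∀ m n, 1 ≤ m → m ≤ n → f m ≤ f n)
    (hle : ∀ n, 1 ≤ n → f n ≤ n)
    (htop : Filter.Tendsto f Filter.atTop Filter.atTop) :
    ∃ w : ℕ → Bool,
      (∃ c : ℕ, ∀ n, 1 ≤ n → complexity w n ≤ c * (n ^ 2 * f n)) ∧
      ∀ k : ℕ, 1 ≤ k →
        ¬ ∃ S : Fin k → Set (List Bool),
            (∀ i, ∃ C : ℕ, ∀ n, langComplexity (S i) n ≤ C) ∧
            (∀ v ∈ Factors w, ∃ s : Fin k → List Bool,
              (∀ i, s i ∈ S i) ∧ v = (List.ofFn s).flatten) := by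
  refine ⟨Blocks.word f, ⟨29, Blocks.complexity_le f hf1 hmono hle⟩, ?_⟩
  rintro k hk ⟨S, hbd, hS⟩
  exact Blocks.not_in_product f hmono hle htop k hk S hbd hS
end

section
/- Let f : ℕ_{>0} → ℕ be nondecreasing with f(1) ≥ 1 and f(n) ≤ n for all n, and let k(p,q) be positive integers defined for p ≥ 1 and 1 ≤ q ≤ f(p) satisfying k(p,q) ≤ k(p,q+1) and k(p,f(p)) ≤ k(p+1,1). Then the infinite word w = ∏_{p=1}^∞ ∏_{q=1}^{f(p)} (a^p b^q)^{k(p,q)} over {a,b} has subword complexity p_w(n) = O(n² f(n)). -/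
/-- The block `(a^p b^q)^m` over `{a, b}` with `true = a`, `false = b`. -/
def blockPQ (p q m : ℕ) : List Bool :=
  (List.replicate m (List.replicate p true ++ List.replicate q false)).flatten

/-- The word `∏_{q=1}^{f(p)} (a^p b^q)^{k(p,q)}`. -/
def rowBlock (f : ℕ → ℕ) (kk : ℕ → ℕ → ℕ) (p : ℕ) : List Bool :=
  ((List.range (f p)).map (fun j => blockPQ p (j + 1) (kk p (j + 1)))).flatten

/-- The finite word `∏_{p=1}^{P} ∏_{q=1}^{f(p)} (a^p b^q)^{k(p,q)}`. -/
def wPrefix (f : ℕ → ℕ) (kk : ℕ → ℕ → ℕ) (P : ℕ) : List Bool :=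
  ((List.range P).map (fun i => rowBlock f kk (i + 1))).flatten

/-- `w` is the infinite word `∏_{p=1}^∞ ∏_{q=1}^{f(p)} (a^p b^q)^{k(p,q)}`: every finite
partial product is a prefix of `w`. -/
def IsProdWord (f : ℕ → ℕ) (kk : ℕ → ℕ → ℕ) (w : ℕ → Bool) : Prop :=
  ∀ P : ℕ, wordSeg w 0 (wPrefix f kk P).length = wPrefix f kk P

/-! ### Positions in concatenations -/

/-- The concatenation `g 0 ++ g 1 ++ ... ++ g (J-1)`. Both `wPrefix` and `rowBlock` have this
shape. -/
def catTo (g : ℕ → List Bool) (J : ℕ) : List Bool :=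
  ((List.range J).map g).flatten

lemma catTo_succ (g : ℕ → List Bool) (J : ℕ) : catTo g (J + 1) = catTo g J ++ g J := by
  simp [catTo, List.range_succ]

lemma catTo_getElem? (g : ℕ → List Bool) (J j t : ℕ) (hj : j < J) (ht : t < (g j).length) :
    (catTo g J)[(catTo g j).length + t]? = (g j)[t]? := by
  induction J with
  | zero => omega
  | succ J ih =>
    rw [catTo_succ]
    rcases Nat.lt_succ_iff_lt_or_eq.mp hj with h | h
    · have h1 := ih h
      rw [List.getElem?_eq_getElem ht] at h1
      obtain ⟨hl, -⟩ := List.getElem?_eq_some_iff.mp h1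
      rw [List.getElem?_append_left hl, ih h]
    · subst h
      rw [List.getElem?_append_right (by omega)]
      congr 1
      omega

lemma catTo_locate (g : ℕ → List Bool) (J i : ℕ) (hi : i < (catTo g J).length) :
    ∃ j t, j < J ∧ t < (g j).length ∧ i = (catTo g j).length + t := by
  induction J with
  | zero => simp [catTo] at hi
  | succ J ih =>
    by_cases h : i < (catTo g J).length
    · obtain ⟨j, t, hj, ht, he⟩ := ih h
      exact ⟨j, t, by omega, ht, he⟩
    · rw [catTo_succ, List.length_append] at hi
      exact ⟨J, i - (catTo g J).length, by omega, by omega, by omega⟩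

lemma blockPQ_length (p q m : ℕ) : (blockPQ p q m).length = m * (p + q) := by
  simp [blockPQ]

lemma blockPQ_getElem? (p q m t : ℕ) (ht : t < m * (p + q)) :
    (blockPQ p q m)[t]? = some (decide (t % (p + q) < p)) := by
  induction m generalizing t with
  | zero => omega
  | succ m ih =>
    have hs : blockPQ p q (m + 1)
        = (List.replicate p true ++ List.replicate q false) ++ blockPQ p q m := by
      simp [blockPQ, List.replicate_succ]
    rw [hs]
    by_cases h : t < p + q
    · rw [List.getElem?_append_left (by simpa using h), Nat.mod_eq_of_lt h]
      by_cases h2 : t < p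
      · rw [List.getElem?_append_left (by simpa using h2)]
        simp [h2]
      · rw [List.getElem?_append_right (by simpa using h2)]
        rw [List.getElem?_replicate, List.length_replicate, if_pos (by omega)]
        simp [h2]
    · rw [List.getElem?_append_right (by simpa using h)]
      have h3 : t - (List.replicate p true ++ List.replicate q false).length = t - (p + q) := by
        simp
      rw [h3, ih _ (by rw [Nat.succ_mul] at ht; omega), ← Nat.mod_eq_sub_mod (by omega)]

/-! ### Blocks of the infinite word -/

/-- The starting position in `w` of the block `(a^p b^q)^{k(p,q)}` with `p = P + 1`,
`q = j + 1`. -/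
def blockPos (f : ℕ → ℕ) (kk : ℕ → ℕ → ℕ) (P j : ℕ) : ℕ :=
  (wPrefix f kk P).length
    + (catTo (fun j => blockPQ (P + 1) (j + 1) (kk (P + 1) (j + 1))) j).length

/-- The length of the block `(a^p b^q)^{k(p,q)}` with `p = P + 1`, `q = j + 1`. -/
def blockLen (kk : ℕ → ℕ → ℕ) (P j : ℕ) : ℕ :=
  kk (P + 1) (j + 1) * (P + 1 + (j + 1))

lemma blockPos_succ (f : ℕ → ℕ) (kk : ℕ → ℕ → ℕ) (P j : ℕ) :
    blockPos f kk P (j + 1) = blockPos f kk P j + blockLen kk P j := by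
  simp only [blockPos, blockLen, catTo_succ, List.length_append, blockPQ_length]
  omega

lemma wPrefix_succ (f : ℕ → ℕ) (kk : ℕ → ℕ → ℕ) (P : ℕ) :
    wPrefix f kk (P + 1) = wPrefix f kk P ++ rowBlock f kk (P + 1) :=
  catTo_succ (fun i => rowBlock f kk (i + 1)) P

lemma blockPos_row_end (f : ℕ → ℕ) (kk : ℕ → ℕ → ℕ) (P : ℕ) :
    blockPos f kk P (f (P + 1)) = blockPos f kk (P + 1) 0 := by
  have h : blockPos f kk (P + 1) 0 = (wPrefix f kk (P + 1)).length := by simp [blockPos, catTo]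
  rw [h, wPrefix_succ, List.length_append]
  rfl

lemma w_eq_prefix {f : ℕ → ℕ} {kk : ℕ → ℕ → ℕ} {w : ℕ → Bool} (hw : IsProdWord f kk w)
    (P i : ℕ) (hi : i < (wPrefix f kk P).length) : (wPrefix f kk P)[i]? = some (w i) := by
  rw [← hw P]
  simp [wordSeg, hi]

/-- Inside a block, `w` is given by the offset modulo the period `p + q`. -/
lemma w_block {f : ℕ → ℕ} {kk : ℕ → ℕ → ℕ} {w : ℕ → Bool} (hw : IsProdWord f kk w)
    (P j t : ℕ) (hj : j < f (P + 1)) (ht : t < blockLen kk P j) :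
    w (blockPos f kk P j + t) = decide (t % (P + 1 + (j + 1)) < P + 1) := by
  set g : ℕ → List Bool := fun j => blockPQ (P + 1) (j + 1) (kk (P + 1) (j + 1)) with hg
  have hgl : t < (g j).length := by simpa [hg, blockPQ_length, blockLen] using ht
  have h1 : (rowBlock f kk (P + 1))[(catTo g j).length + t]?
      = some (decide (t % (P + 1 + (j + 1)) < P + 1)) := by
    have h := catTo_getElem? g (f (P + 1)) j t hj hgl
    rw [show (g j)[t]? = some (decide (t % (P + 1 + (j + 1)) < P + 1)) from
      blockPQ_getElem? _ _ _ _ ht] at h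
    exact h
  have h2 : (wPrefix f kk (P + 1))[blockPos f kk P j + t]?
      = some (decide (t % (P + 1 + (j + 1)) < P + 1)) := by
    rw [wPrefix_succ, List.getElem?_append_right (by unfold blockPos; omega), ← h1]
    congr 1
    rw [show blockPos f kk P j = (wPrefix f kk P).length + (catTo g j).length from rfl]
    omega
  obtain ⟨hl, -⟩ := List.getElem?_eq_some_iff.mp h2
  rw [w_eq_prefix hw _ _ hl] at h2
  exact Option.some.inj h2

lemma le_wPrefix_length {f : ℕ → ℕ} {kk : ℕ → ℕ → ℕ} (hf : ∀ p, 1 ≤ p → 1 ≤ f p)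
    (hkpos : ∀ p q, 1 ≤ p → 1 ≤ q → q ≤ f p → 1 ≤ kk p q) (P : ℕ) :
    P ≤ (wPrefix f kk P).length := by
  induction P with
  | zero => omega
  | succ P ih =>
    rw [wPrefix_succ, List.length_append]
    have h0 : rowBlock f kk (P + 1) ≠ [] := by
      obtain ⟨m, hm⟩ : ∃ m, f (P + 1) = m + 1 := ⟨f (P + 1) - 1, by have := hf (P + 1); omega⟩
      have hk := hkpos (P + 1) (m + 1) (by omega) (by omega) (by omega)
      have h : rowBlock f kk (P + 1)
          = catTo (fun j => blockPQ (P + 1) (j + 1) (kk (P + 1) (j + 1))) m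
            ++ blockPQ (P + 1) (m + 1) (kk (P + 1) (m + 1)) := by
        change catTo _ (f (P + 1)) = _
        rw [hm, catTo_succ]
      rw [h]
      intro hc
      have hlen := congrArg List.length hc
      rw [List.length_append, blockPQ_length, List.length_nil] at hlen
      have := Nat.mul_pos hk (show 0 < P + 1 + (m + 1) by omega)
      omega
    have := List.length_pos_iff.mpr h0
    omega

lemma exists_block {f : ℕ → ℕ} {kk : ℕ → ℕ → ℕ} (hf : ∀ p, 1 ≤ p → 1 ≤ f p)
    (hkpos : ∀ p q, 1 ≤ p → 1 ≤ q → q ≤ f p → 1 ≤ kk p q) (i : ℕ) :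
    ∃ P j t, j < f (P + 1) ∧ t < blockLen kk P j ∧ i = blockPos f kk P j + t := by
  have hi : i < (wPrefix f kk (i + 1)).length := le_wPrefix_length hf hkpos (i + 1)
  obtain ⟨P, s, -, hs, rfl⟩ := catTo_locate (fun i => rowBlock f kk (i + 1)) (i + 1) i hi
  obtain ⟨j, t, hj, ht, rfl⟩ := catTo_locate
    (fun j => blockPQ (P + 1) (j + 1) (kk (P + 1) (j + 1))) (f (P + 1)) s hs
  refine ⟨P, j, t, hj, ?_, ?_⟩
  · simpa [blockPQ_length, blockLen] using ht
  · unfold blockPos wPrefix catTo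
    omega

/-! ### Windows in rows of large index -/

/-- A run of `a` that begins right after a letter of row `P + 1` has length at least `P + 1`. -/
lemma run_true {f : ℕ → ℕ} {kk : ℕ → ℕ → ℕ} {w : ℕ → Bool} (hf : ∀ p, 1 ≤ p → 1 ≤ f p)
    (hkpos : ∀ p q, 1 ≤ p → 1 ≤ q → q ≤ f p → 1 ≤ kk p q) (hw : IsProdWord f kk w)
    (P j t : ℕ) (hj : j < f (P + 1)) (ht : t < blockLen kk P j)
    (h0 : w (blockPos f kk P j + t) = false) (h1 : w (blockPos f kk P j + t + 1) = true)
    (s : ℕ) (hs : s < P + 1) : w (blockPos f kk P j + t + 1 + s) = true := by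
  have start : ∀ P' j', P ≤ P' → j' < f (P' + 1) → w (blockPos f kk P' j' + s) = true := by
    intro P' j' hP hj'
    have hk := hkpos (P' + 1) (j' + 1) (by omega) (by omega) (by omega)
    have hl : P' + 1 + (j' + 1) ≤ blockLen kk P' j' := Nat.le_mul_of_pos_left _ hk
    rw [w_block hw P' j' s hj' (by omega), Nat.mod_eq_of_lt (by omega)]
    simpa using (by omega : s < P' + 1)
  by_cases hlt : t + 1 < blockLen kk P j
  · rw [w_block hw P j t hj ht] at h0
    rw [add_assoc, w_block hw P j (t + 1) hj hlt] at h1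
    simp only [decide_eq_false_iff_not, decide_eq_true_eq, not_lt] at h0 h1
    set d := P + 1 + (j + 1) with hd
    -- the offset modulo the period passes from at least `p` to below `p`, so it wraps to zero
    have hz : (t + 1) % d = 0 := by
      rw [Nat.add_mod] at h1 ⊢
      have hlt' := Nat.mod_lt t (show 0 < d by omega)
      rw [Nat.mod_eq_of_lt (show 1 < d by omega)] at h1 ⊢
      by_cases h : t % d + 1 < d
      · rw [Nat.mod_eq_of_lt h] at h1
        omega
      · rw [show t % d + 1 = d by omega, Nat.mod_self]
    obtain ⟨c, hc⟩ := Nat.dvd_of_mod_eq_zero hz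
    have hL : blockLen kk P j = d * kk (P + 1) (j + 1) := by
      simp [blockLen, hd, mul_comm]
    have hck : c < kk (P + 1) (j + 1) := by
      rw [hL, hc] at hlt
      exact lt_of_mul_lt_mul_left hlt (Nat.zero_le _)
    have hle : d * (c + 1) ≤ blockLen kk P j := by
      rw [hL]
      exact Nat.mul_le_mul_left _ hck
    rw [mul_add] at hle
    rw [add_assoc, add_assoc, w_block hw P j _ hj (by omega), ← add_assoc, hc,
      Nat.mul_add_mod, Nat.mod_eq_of_lt (by omega)]
    simpa using hs
  · have he : blockPos f kk P j + t + 1 = blockPos f kk P (j + 1) := by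
      rw [blockPos_succ]
      omega
    rw [he]
    by_cases hj' : j + 1 < f (P + 1)
    · exact start P (j + 1) le_rfl hj'
    · rw [show j + 1 = f (P + 1) by omega, blockPos_row_end]
      exact start (P + 1) 0 (by omega) (hf _ (by omega))

lemma wPrefix_length_mono (f : ℕ → ℕ) (kk : ℕ → ℕ → ℕ) :
    Monotone (fun P => (wPrefix f kk P).length) :=
  monotone_nat_of_le_succ fun P => by simp [wPrefix_succ]

/-- A position at or beyond the start of row `n + 1` belongs to a row of index at least
`n + 1`. -/
lemma row_ge {f : ℕ → ℕ} {kk : ℕ → ℕ → ℕ} {n P j t : ℕ} (hj : j < f (P + 1))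
    (ht : t < blockLen kk P j) (h : (wPrefix f kk n).length ≤ blockPos f kk P j + t) :
    n ≤ P := by
  by_contra hc
  have hmon : (wPrefix f kk (P + 1)).length ≤ (wPrefix f kk n).length :=
    wPrefix_length_mono f kk (by omega)
  have h1 : Monotone (fun j => blockPos f kk P j) :=
    monotone_nat_of_le_succ fun j => by simp [blockPos_succ]
  have h2 : blockPos f kk P (j + 1) ≤ blockPos f kk P (f (P + 1)) := h1 hj
  have h3 : blockPos f kk (P + 1) 0 = (wPrefix f kk (P + 1)).length := by
    simp [blockPos, catTo]
  rw [blockPos_row_end, h3, blockPos_succ] at h2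
  omega

/-- If every run of `a` in `u` that follows a `b` has length at least `n`, then the first `n`
letters of `u` read `a^x b^(y-x) a^(n-y)`. -/
lemma window_shape (u : ℕ → Bool) (n : ℕ)
    (h : ∀ t s, s < n → u t = false → u (t + 1) = true → u (t + 1 + s) = true) :
    ∃ x y, x ≤ n ∧ y ≤ n ∧ ∀ t, t < n → u t = !decide (x ≤ t ∧ t < y) := by
  classical
  by_cases h1 : ∃ t, t < n ∧ u t = false
  swap
  · refine ⟨n, n, le_rfl, le_rfl, fun t ht => ?_⟩
    have : ¬ n ≤ t := by omega
    simp only [this, false_and, decide_false, Bool.not_false]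
    by_contra hc
    exact h1 ⟨t, ht, by simpa using hc⟩
  have hx := Nat.find_spec h1
  have hxm : ∀ t, t < Nat.find h1 → u t = true := fun t ht => by
    have := Nat.find_min h1 ht
    by_contra hc
    exact this ⟨by omega, by simpa using hc⟩
  set x := Nat.find h1
  by_cases h2 : ∃ t, x < t ∧ t < n ∧ u t = true
  · have hy := Nat.find_spec h2
    have hym : ∀ t, x ≤ t → t < Nat.find h2 → u t = false := fun t hxt ht => by
      have := Nat.find_min h2 ht
      rcases hxt.eq_or_lt with rfl | hlt
      · exact hx.2
      by_contra hc
      exact this ⟨hlt, by omega, by simpa using hc⟩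
    set y := Nat.find h2
    obtain ⟨z, hz⟩ : ∃ z, y = z + 1 := ⟨y - 1, by omega⟩
    refine ⟨x, y, by omega, by omega, fun t ht => ?_⟩
    by_cases hc : x ≤ t ∧ t < y
    · simp [hc, hym t hc.1 hc.2]
    · simp only [hc, decide_false, Bool.not_false]
      rcases lt_or_ge t x with hlt | hge
      · exact hxm t hlt
      · have h3 := h z (t - y) (by omega) (hym z (by omega) (by omega)) (by rw [← hz]; exact hy.2.2)
        rwa [← hz, show y + (t - y) = t by omega] at h3
  · refine ⟨x, n, by omega, le_rfl, fun t ht => ?_⟩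
    by_cases hc : x ≤ t
    · simp only [hc, ht, and_self, decide_true, Bool.not_true]
      rcases hc.eq_or_lt with he | hlt
      · rw [← he]; exact hx.2
      by_contra hcc
      exact h2 ⟨t, hlt, ht, by simpa using hcc⟩
    · simp [hc, hxm t (by omega)]

/-! ### Counting factors -/

/-- the word `w = ∏_{p=1}^∞ ∏_{q=1}^{f(p)} (a^p b^q)^{k(p,q)}` has subword
complexity `p_w(n) = O(n² f(n))`. -/
theorem stmt19 (f : ℕ → ℕ) (hf1 : 1 ≤ f 1)
    (hmono : ∀ m n, 1 ≤ m → m ≤ n → f m ≤ f n)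
    (hle : ∀ n, 1 ≤ n → f n ≤ n)
    (kk : ℕ → ℕ → ℕ)
    (hkpos : ∀ p q, 1 ≤ p → 1 ≤ q → q ≤ f p → 1 ≤ kk p q)
    (hk1 : ∀ p q, 1 ≤ p → 1 ≤ q → q + 1 ≤ f p → kk p q ≤ kk p (q + 1))
    (hk2 : ∀ p, 1 ≤ p → kk p (f p) ≤ kk (p + 1) 1)
    (w : ℕ → Bool) (hw : IsProdWord f kk w) :
    ∃ c : ℕ, ∀ n, 1 ≤ n → complexity w n ≤ c * (n ^ 2 * f n) := by
  classical
  have hf : ∀ p, 1 ≤ p → 1 ≤ f p := fun p hp => hf1.trans (hmono 1 p le_rfl hp)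
  refine ⟨7, fun n hn => ?_⟩
  -- the words `a^x b^(y-x) a^(n-y)`
  let A : Finset (List Bool) := (Finset.range (n + 1) ×ˢ Finset.range (n + 1)).image
    fun xy => (List.range n).map fun t => !decide (xy.1 ≤ t ∧ t < xy.2)
  -- factors starting at one of the first `2n` positions of a block of a row `p ≤ n`
  let B : Finset (List Bool) :=
    (Finset.range n ×ˢ (Finset.range (f n) ×ˢ Finset.range (2 * n))).image
      fun z => wordSeg w (blockPos f kk z.1 z.2.1 + z.2.2) n
  -- factors starting at one of the last `n` positions of such a block
  let C : Finset (List Bool) :=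
    (Finset.range n ×ˢ (Finset.range (f n) ×ˢ Finset.range n)).image
      fun z => wordSeg w (blockPos f kk z.1 z.2.1 + blockLen kk z.1 z.2.1 - (z.2.2 + 1)) n
  have hsub : {v : List Bool | v.length = n ∧ v ∈ Factors w} ⊆ ((A ∪ (B ∪ C) : Finset _) : Set _) := by
    rintro v ⟨hv, i, hi⟩
    rw [hv] at hi
    subst hi
    obtain ⟨P, j, t, hj, ht, rfl⟩ := exists_block hf hkpos i
    rw [Finset.mem_coe, Finset.mem_union, Finset.mem_union]
    by_cases hP : n ≤ P
    · left
      set i := blockPos f kk P j + t with hidef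
      have hin : (wPrefix f kk n).length ≤ i := by
        have h1 : (wPrefix f kk n).length ≤ (wPrefix f kk P).length :=
          wPrefix_length_mono f kk hP
        have h2 : (wPrefix f kk P).length ≤ blockPos f kk P j := Nat.le_add_right _ _
        omega
      obtain ⟨x, y, hx, hy, hxy⟩ := window_shape (fun t => w (i + t)) n (by
        intro t s hs h0 h1
        obtain ⟨P', j', t', hj', ht', he⟩ := exists_block hf hkpos (i + t)
        have hP' : n ≤ P' := row_ge hj' ht' (by omega)
        simp only [← add_assoc] at h0 h1 ⊢
        rw [he] at h0 h1 ⊢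
        exact run_true hf hkpos hw P' j' t' hj' ht' h0 h1 s (by omega))
      refine Finset.mem_image.mpr ⟨(x, y), ?_, ?_⟩
      · simp only [Finset.mem_product, Finset.mem_range]
        omega
      · refine List.map_congr_left fun t ht => ?_
        exact (hxy t (List.mem_range.mp ht)).symm
    · right
      have hfn : f (P + 1) ≤ f n := hmono _ _ (by omega) (by omega)
      have hfp : f (P + 1) ≤ P + 1 := hle _ (by omega)
      by_cases hin : t + n ≤ blockLen kk P j
      · left
        have hmod : t % (P + 1 + (j + 1)) < P + 1 + (j + 1) := Nat.mod_lt _ (by omega)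
        have hmle : t % (P + 1 + (j + 1)) ≤ t := Nat.mod_le _ _
        refine Finset.mem_image.mpr ⟨(P, j, t % (P + 1 + (j + 1))), ?_, ?_⟩
        · simp only [Finset.mem_product, Finset.mem_range]
          omega
        · refine List.map_congr_left fun s hs => ?_
          have hs' := List.mem_range.mp hs
          simp only [add_assoc (blockPos f kk P j)]
          rw [w_block hw P j _ hj (by omega), w_block hw P j _ hj (by omega), Nat.mod_add_mod]
      · right
        refine Finset.mem_image.mpr ⟨(P, j, blockLen kk P j - t - 1), ?_, ?_⟩
        · simp only [Finset.mem_product, Finset.mem_range]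
          omega
        · simp only
          congr 1
          omega
  have hA : A.card ≤ (n + 1) * (n + 1) := Finset.card_image_le.trans (by simp)
  have hB : B.card ≤ n * (f n * (2 * n)) := Finset.card_image_le.trans (by simp)
  have hC : C.card ≤ n * (f n * n) := Finset.card_image_le.trans (by simp)
  have hcard : complexity w n ≤ A.card + (B.card + C.card) := by
    refine (Set.ncard_le_ncard hsub (Finset.finite_toSet _)).trans ?_
    rw [Set.ncard_coe_finset]
    exact (Finset.card_union_le _ _).trans (Nat.add_le_add_left (Finset.card_union_le _ _) _)
  have hsq : n ^ 2 * 1 ≤ n ^ 2 * f n := Nat.mul_le_mul_left _ (hf n hn)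
  have hsq2 : (n + 1) * (n + 1) ≤ 4 * n ^ 2 := by nlinarith
  have e1 : n * (f n * (2 * n)) = 2 * (n ^ 2 * f n) := by ring
  have e2 : n * (f n * n) = n ^ 2 * f n := by ring
  omega
end
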